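/- arXiv:1810.12415 — 2 statements merged into one kernel-verified Lean document; each statement's English description precedes it below -/
import Mathlib

section
/- CF = 𝔏(F₂)^w_{O(n)} = 𝔏(SL(2,ℤ))^w_{O(n)} = 𝔏(GL(2,ℤ))^w_{O(n)}: a language is context-free if and only if it is recognized by a weakly linear-time bounded F₂-automaton, if and only if it is recognized by a weakly linear-time bounded SL(2,ℤ)-automaton, if and only if it is recognized by a weakly linear-time bounded GL(2,ℤ)-automaton. -/
/-- A `G`-automaton over input alphabet `α`: a nondeterministic finite automaton
equipped with a register holding an element of the group `G`. -/
structure GAutomaton (α : Type*) (G : Type*) [Group G] where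
  /-- the (finite) state set -/
  Q : Type
  finQ : Finite Q
  /-- the initial state -/
  q0 : Q
  /-- the accepting states -/
  acc : Set Q
  /-- the (finite) transition relation; `none` stands for ε -/
  δ : Set (Q × Option α × Q × G)
  finδ : δ.Finite

namespace GAutomaton

variable {α : Type*} {G : Type*} [Group G]

/-- One computation step between configurations `(state, register, remaining input)`. -/
def Step (M : GAutomaton α G) (c c' : M.Q × G × List α) : Prop :=
  ∃ σ m, (c.1, σ, c'.1, m) ∈ M.δ ∧ c'.2.1 = c.2.1 * m ∧
    match σ with
    | none => c'.2.2 = c.2.2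
    | some s => c.2.2 = s :: c'.2.2

/-- `M.StepsIn k c c'` : configuration `c'` is reachable from `c` in exactly `k` steps. -/
def StepsIn (M : GAutomaton α G) : ℕ → (M.Q × G × List α) → (M.Q × G × List α) → Prop
  | 0, c, c' => c = c'
  | n + 1, c, c' => ∃ d, M.Step c d ∧ M.StepsIn n d c'

/-- `M` accepts the word `w` within `t` computation steps. -/
def AcceptsIn (M : GAutomaton α G) (w : List α) (t : ℕ) : Prop :=
  ∃ k ≤ t, ∃ q ∈ M.acc, M.StepsIn k (M.q0, 1, w) (q, 1, [])

/-- The language recognized by `M`. -/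
def lang (M : GAutomaton α G) : Language α := {w | ∃ t, M.AcceptsIn w t}

/-- `M` is real-time if every transition consumes an input symbol. -/
def RealTime (M : GAutomaton α G) : Prop := ∀ tr ∈ M.δ, tr.2.1 ≠ none

end GAutomaton

/-- `L ∈ 𝔏(G)` : the language `L` is recognized by some `G`-automaton. -/
def GRecognizable (G : Type*) [Group G] {α : Type*} (L : Language α) : Prop :=
  ∃ M : GAutomaton α G, M.lang = L

/-- `L ∈ 𝔏(G)ʷ_{t(n)}` : `L` is recognized by a weakly `t(n)` time-bounded `G`-automaton. -/
def GRecognizableInTime (G : Type*) [Group G] {α : Type*} (L : Language α) (t : ℕ → ℕ) : Prop :=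
  ∃ M : GAutomaton α G, M.lang = L ∧ ∀ w ∈ L, M.AcceptsIn w (t w.length)

/-- `L ∈ 𝔏(G)ʷ_{O(n)}` : `L` is recognized by a weakly linear-time bounded `G`-automaton. -/
def GRecognizableLinTime (G : Type*) [Group G] {α : Type*} (L : Language α) : Prop :=
  ∃ C : ℕ, GRecognizableInTime G L (fun n => C * n + C)

/-!
The register of a free group returns to `1` exactly when the letters multiplied into it cancel like
matching parentheses, so a computation of an automaton over a free group is described by a
context-free grammar. Conversely, a recursive-descent parser is an automaton over the free group on
its return addresses: a call multiplies by a letter and a return by its inverse. A call may at once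
pass to any form derived from its nonterminal, and symbols that derive the empty word are dropped
in advance; every form parsed on the way then either reads a letter by itself or splits its word
into two nonempty parts, so the number of steps is linear. Free groups of finite rank embed
in `F₂`.

A subgroup of finite index recognizes the same languages in the same time, since the state can
remember the coset of the register. The Sanov subgroup of `SL(2, ℤ)` is free of rank two, by
ping-pong on the upper half-plane, and of finite index; `SL(2, ℤ)` has finite index in `GL(2, ℤ)`.
-/

/-! ### Automata as labelled paths -/

namespace GAutomaton

section Path

variable {α Q P L L' : Type*}

/-- `Path δ p ls w q`: the transitions `δ` lead from the state `p` to the state `q` along edges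
with labels `ls`, reading the word `w`. The labels are not evaluated, so that the same notion serves
for group elements and for letters. -/
inductive Path (δ : Set (Q × Option α × Q × L)) : Q → List L → List α → Q → Prop
  | nil (p : Q) : Path δ p [] [] p
  | cons {p q r : Q} {σ : Option α} {l : L} {ls : List L} {w : List α} :
      (p, σ, q, l) ∈ δ → Path δ q ls w r → Path δ p (l :: ls) (σ.toList ++ w) r

variable {δ : Set (Q × Option α × Q × L)}

theorem path_nil_iff {p q : Q} {w : List α} : Path δ p [] w q ↔ w = [] ∧ p = q := by
  constructor
  · rintro ⟨⟩
    exact ⟨rfl, rfl⟩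
  · rintro ⟨rfl, rfl⟩
    exact .nil _

theorem path_cons_iff {p r : Q} {l : L} {ls : List L} {w : List α} :
    Path δ p (l :: ls) w r ↔
      ∃ σ q v, (p, σ, q, l) ∈ δ ∧ Path δ q ls v r ∧ w = σ.toList ++ v := by
  constructor
  · rintro (_ | ⟨h, hp⟩)
    exact ⟨_, _, _, h, hp, rfl⟩
  · rintro ⟨σ, q, v, h, hp, rfl⟩
    exact .cons h hp

theorem path_append_iff {p r : Q} {ls ls' : List L} {w : List α} :
    Path δ p (ls ++ ls') w r ↔ ∃ q u v, Path δ p ls u q ∧ Path δ q ls' v r ∧ w = u ++ v := by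
  constructor
  · intro h
    induction ls generalizing p w with
    | nil => exact ⟨p, [], w, .nil p, h, rfl⟩
    | cons l ls ih =>
      obtain ⟨σ, p', v, hl, hp, rfl⟩ := path_cons_iff.mp h
      obtain ⟨q, u, v, hu, hv, rfl⟩ := ih hp
      exact ⟨q, _, v, .cons hl hu, hv, (List.append_assoc ..).symm⟩
  · rintro ⟨q, u, v, hu, hv, rfl⟩
    induction hu with
    | nil => exact hv
    | cons hl _ ih => simpa only [List.cons_append, List.append_assoc] using .cons hl (ih hv)

theorem Path.append {p q r : Q} {ls ls' : List L} {u v : List α} (h : Path δ p ls u q)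
    (h' : Path δ q ls' v r) : Path δ p (ls ++ ls') (u ++ v) r :=
  path_append_iff.mpr ⟨q, u, v, h, h', rfl⟩

/-- The transitions `δ`, with every label replaced by its image under `f`. -/
def mapLabel (f : L → L') (δ : Set (Q × Option α × Q × L)) : Set (Q × Option α × Q × L') :=
  (fun t => (t.1, t.2.1, t.2.2.1, f t.2.2.2)) '' δ

theorem path_mapLabel_iff {f : L → L'} {p q : Q} {ls : List L'} {w : List α} :
    Path (mapLabel f δ) p ls w q ↔ ∃ ks, ls = ks.map f ∧ Path δ p ks w q := by
  constructor
  · intro h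
    induction h with
    | nil p => exact ⟨[], rfl, .nil p⟩
    | cons hl _ ih =>
      obtain ⟨⟨p, σ, q, l⟩, hl, ⟨⟩⟩ := hl
      obtain ⟨ks, rfl, h⟩ := ih
      exact ⟨l :: ks, rfl, .cons hl h⟩
  · rintro ⟨ks, rfl, h⟩
    induction h with
    | nil p => exact .nil p
    | cons hl _ ih => exact .cons ⟨_, hl, rfl⟩ ih

theorem exists_path_comap_iff {ι : P → Q} (hι : ∀ t ∈ δ, t.2.2.1 ∈ Set.range ι) {acc : Set Q}
    {p : P} {ls : List L} {w : List α} :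
    (∃ q ∈ ι ⁻¹' acc, Path {t | (ι t.1, t.2.1, ι t.2.2.1, t.2.2.2) ∈ δ} p ls w q) ↔
      ∃ q ∈ acc, Path δ (ι p) ls w q := by
  induction ls generalizing p w with
  | nil => simp [path_nil_iff]
  | cons l ls ih =>
    constructor
    · rintro ⟨q, hq, h⟩
      obtain ⟨σ, p', v, hl, hp, rfl⟩ := path_cons_iff.mp h
      obtain ⟨q', hq', hp'⟩ := ih.mp ⟨q, hq, hp⟩
      exact ⟨q', hq', .cons hl hp'⟩
    · rintro ⟨q, hq, h⟩
      obtain ⟨σ, _, v, hl, hp, rfl⟩ := path_cons_iff.mp h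
      obtain ⟨p', rfl⟩ := hι _ hl
      obtain ⟨q', hq', hp'⟩ := ih.mpr ⟨q, hq, hp⟩
      exact ⟨q', hq', .cons hl hp'⟩

/-- A finite transition relation visits only finitely many states. -/
theorem exists_fin_path_iff (hδ : δ.Finite) (q₀ : Q) (acc : Set Q) :
    ∃ (n : ℕ) (δ' : Set (Fin n × Option α × Fin n × L)) (q₀' : Fin n) (acc' : Set (Fin n)),
      δ'.Finite ∧ ∀ ls w, (∃ q ∈ acc', Path δ' q₀' ls w q) ↔ ∃ q ∈ acc, Path δ q₀ ls w q := by
  have hS : (insert q₀ ((fun t => t.2.2.1) '' δ)).Finite := (hδ.image _).insert q₀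
  obtain ⟨n, ι, hι, hrange⟩ := hS.fin_param
  obtain ⟨q₀', rfl⟩ : q₀ ∈ Set.range ι := hrange ▸ Set.mem_insert ..
  have htarget : ∀ t ∈ δ, t.2.2.1 ∈ Set.range ι :=
    fun t ht => hrange ▸ Set.mem_insert_of_mem _ (Set.mem_image_of_mem _ ht)
  refine ⟨n, _, q₀', ι ⁻¹' acc, hδ.preimage (Function.Injective.injOn ?_),
    fun ls w => exists_path_comap_iff htarget⟩
  rintro ⟨p, σ, q, l⟩ ⟨p', σ', q', l'⟩ h
  simp only [Prod.mk.injEq, hι.eq_iff] at h ⊢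
  exact h

end Path

variable {α G : Type*} [Group G]

theorem stepsIn_iff {M : GAutomaton α G} {k : ℕ} {p q : M.Q} {x y : G} {w v : List α} :
    M.StepsIn k (p, x, w) (q, y, v) ↔
      ∃ ms u, ms.length = k ∧ Path M.δ p ms u q ∧ y = x * ms.prod ∧ w = u ++ v := by
  induction k generalizing p x w with
  | zero =>
    simp only [StepsIn, Prod.mk.injEq, List.length_eq_zero_iff, exists_and_left,
      exists_eq_left, path_nil_iff, List.prod_nil, mul_one, and_assoc, List.nil_append]
    tauto
  | succ k ih =>
    constructor
    · rintro ⟨⟨p', x', w'⟩, ⟨σ, m, hm, rfl : x' = x * m, hσ⟩, h⟩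
      obtain ⟨ms, u, rfl, hp, rfl, rfl⟩ := ih.mp h
      refine ⟨m :: ms, σ.toList ++ u, rfl, .cons hm hp, by rw [List.prod_cons, mul_assoc], ?_⟩
      cases σ with
      | none => exact Eq.symm hσ
      | some => exact hσ
    · rintro ⟨_ | ⟨m, ms⟩, u, hk, hp, rfl, rfl⟩
      · cases hk
      obtain ⟨σ, p', u, hm, hp', rfl⟩ := path_cons_iff.mp hp
      refine ⟨(p', x * m, u ++ v), ⟨σ, m, hm, rfl, ?_⟩,
        ih.mpr ⟨ms, u, Nat.succ.inj hk, hp', by rw [List.prod_cons, mul_assoc], rfl⟩⟩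
      cases σ <;> rfl

theorem acceptsIn_iff {M : GAutomaton α G} {w : List α} {t : ℕ} :
    M.AcceptsIn w t ↔
      ∃ ms, ms.length ≤ t ∧ ms.prod = 1 ∧ ∃ q ∈ M.acc, Path M.δ M.q0 ms w q := by
  simp only [AcceptsIn, stepsIn_iff, one_mul, List.append_nil]
  constructor
  · rintro ⟨_, hk, q, hq, ms, _, rfl, hp, hprod, rfl⟩
    exact ⟨ms, hk, hprod.symm, q, hq, hp⟩
  · rintro ⟨ms, hk, hprod, q, hq, hp⟩
    exact ⟨_, hk, q, hq, ms, w, rfl, hp, hprod.symm, rfl⟩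

theorem mem_lang_iff {M : GAutomaton α G} {w : List α} :
    w ∈ M.lang ↔ ∃ ms : List G, ms.prod = 1 ∧ ∃ q ∈ M.acc, Path M.δ M.q0 ms w q := by
  constructor
  · rintro ⟨t, h⟩
    obtain ⟨ms, -, h⟩ := acceptsIn_iff.mp h
    exact ⟨ms, h⟩
  · rintro ⟨ms, h⟩
    exact ⟨ms.length, acceptsIn_iff.mpr ⟨ms, le_rfl, h⟩⟩

theorem exists_acceptsIn_iff {Q : Type*} {δ : Set (Q × Option α × Q × G)} (hδ : δ.Finite)
    (q₀ : Q) (acc : Set Q) :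
    ∃ M : GAutomaton α G, ∀ w t, M.AcceptsIn w t ↔
      ∃ ms, ms.length ≤ t ∧ ms.prod = 1 ∧ ∃ q ∈ acc, Path δ q₀ ms w q := by
  obtain ⟨n, δ', q₀', acc', hδ', h⟩ := exists_fin_path_iff hδ q₀ acc
  refine ⟨⟨Fin n, inferInstance, q₀', acc', δ', hδ'⟩, fun w t => ?_⟩
  simp only [acceptsIn_iff, h]

end GAutomaton

section Transfer

open GAutomaton

variable {α G H : Type*} [Group G] [Group H] {L : Language α} {t : ℕ → ℕ}

theorem GRecognizableInTime.of_forall_exists_acceptsIn_iff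
    (h : ∀ M : GAutomaton α G, ∃ M' : GAutomaton α H,
      ∀ w n, M'.AcceptsIn w n ↔ M.AcceptsIn w n) (hL : GRecognizableInTime G L t) :
    GRecognizableInTime H L t := by
  obtain ⟨M, rfl, ht⟩ := hL
  obtain ⟨M', hM'⟩ := h M
  exact ⟨M', Set.ext fun w => exists_congr (hM' w), fun w hw => (hM' w _).mpr (ht w hw)⟩

theorem GRecognizableInTime.of_injective {f : G →* H} (hf : Function.Injective f) :
    GRecognizableInTime G L t → GRecognizableInTime H L t := by
  refine .of_forall_exists_acceptsIn_iff fun M => ?_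
  have hδ : (mapLabel f M.δ).Finite := M.finδ.image _
  obtain ⟨M', hM'⟩ := exists_acceptsIn_iff hδ M.q0 M.acc
  refine ⟨M', fun w n => ?_⟩
  rw [hM', acceptsIn_iff]
  constructor
  · rintro ⟨_, hn, hprod, q, hq, h⟩
    obtain ⟨ms, rfl, hp⟩ := path_mapLabel_iff.mp h
    rw [← map_list_prod, map_eq_one_iff f hf] at hprod
    exact ⟨ms, by simpa using hn, hprod, q, hq, hp⟩
  · rintro ⟨ms, hn, hprod, q, hq, h⟩
    exact ⟨ms.map f, by simpa using hn, by rw [← map_list_prod, hprod, map_one], q, hq,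
      path_mapLabel_iff.mpr ⟨ms, rfl, h⟩⟩

end Transfer

/-! ### Passing to a subgroup of finite index -/

section FiniteIndex

open GAutomaton

variable {α Q G : Type*} [Group G] {H : Subgroup G}

theorem inv_out_mul_mul_out_mem (i : G ⧸ H) (m : G) : i.out⁻¹ * m * (m⁻¹ • i).out ∈ H := by
  rw [mul_assoc, ← QuotientGroup.eq, QuotientGroup.out_eq', ← smul_eq_mul,
    ← MulAction.Quotient.smul_mk, QuotientGroup.out_eq', smul_inv_smul]

/-- The Schreier transitions: the state also keeps track of a coset `i` of `H`, and the label `m` of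
an edge is replaced by the element of `H` which compares it with the chosen coset
representatives. -/
noncomputable def schreier (H : Subgroup G) (δ : Set (Q × Option α × Q × G)) :
    Set ((Q × G ⧸ H) × Option α × (Q × G ⧸ H) × H) :=
  Set.image2 (fun t i => ((t.1, i), t.2.1, (t.2.2.1, t.2.2.2⁻¹ • i),
    ⟨_, inv_out_mul_mul_out_mem i t.2.2.2⟩)) δ Set.univ

variable {δ : Set (Q × Option α × Q × G)}

theorem exists_path_of_path_schreier {p q : Q × G ⧸ H} {hs : List H} {w : List α}
    (h : Path (schreier H δ) p hs w q) :
    ∃ ms, ms.length = hs.length ∧ Path δ p.1 ms w q.1 ∧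
      q.2 = ms.prod⁻¹ • p.2 ∧ (hs.prod : G) = p.2.out⁻¹ * ms.prod * q.2.out := by
  induction h with
  | nil p => exact ⟨[], rfl, .nil _, by simp, by simp⟩
  | cons hl _ ih =>
    obtain ⟨⟨p, σ, q, m⟩, ht, i, -, ⟨⟩⟩ := hl
    obtain ⟨ms, hlen, hp, hi, hprod⟩ := ih
    refine ⟨m :: ms, congrArg Nat.succ hlen, .cons ht hp, ?_, ?_⟩
    · rw [hi, List.prod_cons, mul_inv_rev, mul_smul]
    · rw [List.prod_cons, Subgroup.coe_mul, hprod, List.prod_cons]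
      group

theorem GAutomaton.Path.exists_path_schreier {p q : Q} {ms : List G} {w : List α}
    (h : Path δ p ms w q) (i : G ⧸ H) :
    ∃ hs, hs.length = ms.length ∧ Path (schreier H δ) (p, i) hs w (q, ms.prod⁻¹ • i) ∧
      (hs.prod : G) = i.out⁻¹ * ms.prod * (ms.prod⁻¹ • i).out := by
  induction h generalizing i with
  | nil p => exact ⟨[], rfl, by simpa using .nil (p, i), by simp⟩
  | @cons p q r σ m ms w ht _ ih =>
    obtain ⟨hs, hlen, hp, hprod⟩ := ih (m⁻¹ • i)
    rw [List.prod_cons, mul_inv_rev, mul_smul]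
    refine ⟨_ :: hs, congrArg Nat.succ hlen, .cons ⟨_, ht, i, trivial, rfl⟩ hp, ?_⟩
    rw [List.prod_cons, Subgroup.coe_mul, hprod]
    group

theorem GRecognizableInTime.subgroup [H.FiniteIndex] {L : Language α} {t : ℕ → ℕ} :
    GRecognizableInTime G L t → GRecognizableInTime H L t := by
  refine .of_forall_exists_acceptsIn_iff fun M => ?_
  have hδ : (schreier H M.δ).Finite := M.finδ.image2 _ Set.finite_univ
  let i₀ : G ⧸ H := QuotientGroup.mk 1
  have hprod_iff (ms : List G) : i₀.out⁻¹ * ms.prod * i₀.out = 1 ↔ ms.prod = 1 := by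
    rw [mul_assoc, inv_mul_eq_one, eq_comm, mul_eq_right]
  obtain ⟨M', hM'⟩ := exists_acceptsIn_iff hδ (M.q0, i₀) (M.acc ×ˢ {i₀})
  refine ⟨M', fun w n => ?_⟩
  rw [hM', acceptsIn_iff]
  constructor
  · rintro ⟨hs, hn, hprod, ⟨q, _⟩, ⟨hq, rfl⟩, hp⟩
    obtain ⟨ms, hlen, hp, -, hprod'⟩ := exists_path_of_path_schreier hp
    rw [hprod, Subgroup.coe_one, eq_comm] at hprod'
    exact ⟨ms, hlen ▸ hn, (hprod_iff ms).mp hprod', q, hq, hp⟩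
  · rintro ⟨ms, hn, hprod, q, hq, hp⟩
    obtain ⟨hs, hlen, hp', hprod'⟩ := hp.exists_path_schreier i₀
    simp only [hprod, inv_one, one_smul, mul_one, inv_mul_cancel] at hp' hprod'
    exact ⟨hs, hlen ▸ hn, Subtype.ext hprod', (q, i₀), ⟨hq, rfl⟩, hp'⟩

theorem gRecognizableLinTime_iff_of_finiteIndex {K : Type*} [Group K] {φ : K →* G}
    (hφ : Function.Injective φ) [φ.range.FiniteIndex] {L : Language α} :
    GRecognizableLinTime K L ↔ GRecognizableLinTime G L :=
  exists_congr fun _ => ⟨.of_injective hφ,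
    fun h => h.subgroup.of_injective (f := (MonoidHom.ofInjective hφ).symm.toMonoidHom)
      (MonoidHom.ofInjective hφ).symm.injective⟩

end FiniteIndex

/-! ### Free cancellation as matching parentheses -/

section FreeReduction

open FreeGroup

variable {X : Type*}

theorem mk_eq_one_iff_red_nil {l : List (X × Bool)} : mk l = 1 ↔ Red l [] := by
  rw [one_eq_mk, Red.exact]
  constructor
  · rintro ⟨_, h, h'⟩
    exact Red.nil_iff.mp h' ▸ h
  · exact fun h => ⟨[], h, .refl⟩

theorem mk_reduceOption_cancel {x : X} {b : Bool} {ls ls' : List (Option (X × Bool))}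
    (h : mk ls.reduceOption = 1) (h' : mk ls'.reduceOption = 1) :
    mk (some (x, b) :: (ls ++ some (x, !b) :: ls')).reduceOption = 1 := by
  rw [mk_eq_one_iff_red_nil] at h h' ⊢
  rw [List.reduceOption_cons_of_some, Red.cons_nil_iff_singleton, List.reduceOption_append,
    List.reduceOption_cons_of_some]
  exact h.append_append (Red.cons_cons h')

theorem exists_append_cons_of_red_reduceOption {ls : List (Option (X × Bool))} {b : X × Bool}
    (h : Red ls.reduceOption [b]) :
    ∃ l₁ l₂, ls = l₁ ++ some b :: l₂ ∧ Red l₁.reduceOption [] ∧ Red l₂.reduceOption [] := by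
  induction hn : ls.length using Nat.strong_induction_on generalizing ls b with
  | _ n ih =>
    subst hn
    rcases ls with _ | ⟨_ | a, ls⟩
    · cases Red.nil_iff.mp h
    · obtain ⟨l₁, l₂, rfl, h₁, h₂⟩ := ih _ (Nat.lt_succ_self _) (ls := ls) h rfl
      exact ⟨none :: l₁, l₂, rfl, h₁, h₂⟩
    rw [List.reduceOption_cons_of_some] at h
    obtain rfl | hab := eq_or_ne a b
    · exact ⟨[], ls, rfl, .refl, (Red.cons_cons_iff _).mp h⟩
    -- The inverse `a⁻¹` cancelling `a` stands before `b`.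
    have h' : Red ls.reduceOption ([(a.1, !a.2)] ++ [b]) := Red.inv_of_red_of_ne hab h
    obtain ⟨_, _, hls, hl, hl'⟩ := Red.to_append_iff.mp h'
    obtain ⟨l, l', rfl, rfl, rfl⟩ := (List.reduceOption_eq_append_iff ..).mp hls
    obtain ⟨l₁, l₂, rfl, h₁, h₂⟩ := ih _ (by grind) hl rfl
    obtain ⟨l₃, l₄, rfl, h₃, h₄⟩ := ih _ (by grind) hl' rfl
    refine ⟨some a :: l₁ ++ some (a.1, !a.2) :: l₂ ++ l₃, l₄, by simp, ?_, h₄⟩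
    have hcancel : Red ((a.1, a.2) :: (l₁.reduceOption ++ [(a.1, !a.2)])) [] :=
      Red.cons_nil_iff_singleton.mpr (by simpa using h₁.append_append .refl)
    simpa [List.reduceOption_append] using (hcancel.append_append h₂).append_append h₃

end FreeReduction

namespace GAutomaton

section Balanced

open FreeGroup

variable {α Q X : Type*}

/-- `Balanced δ p w q`: the transitions `δ`, labelled by letters and inverse letters, lead from `p`
to `q` reading `w`, and the letters along the way cancel like matching parentheses. -/
inductive Balanced (δ : Set (Q × Option α × Q × Option (X × Bool))) : Q → List α → Q → Prop
  | nil (p : Q) : Balanced δ p [] p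
  | silent {p q r : Q} {σ : Option α} {w : List α} :
      (p, σ, q, none) ∈ δ → Balanced δ q w r → Balanced δ p (σ.toList ++ w) r
  | cancel {p p' q q' r : Q} {σ τ : Option α} {x : X} {b : Bool} {v w : List α} :
      (p, σ, p', some (x, b)) ∈ δ → Balanced δ p' v q' → (q', τ, q, some (x, !b)) ∈ δ →
      Balanced δ q w r → Balanced δ p (σ.toList ++ (v ++ (τ.toList ++ w))) r

variable {δ : Set (Q × Option α × Q × Option (X × Bool))}

theorem Balanced.exists_path {p q : Q} {w : List α} (h : Balanced δ p w q) :
    ∃ ls, FreeGroup.mk ls.reduceOption = 1 ∧ Path δ p ls w q := by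
  induction h with
  | nil p => exact ⟨[], rfl, .nil p⟩
  | silent hl _ ih =>
    obtain ⟨ls, hls, hp⟩ := ih
    exact ⟨none :: ls, hls, .cons hl hp⟩
  | @cancel _ _ _ _ _ _ _ x b _ _ hl _ hl' _ ih ih' =>
    obtain ⟨ls, hls, hp⟩ := ih
    obtain ⟨ls', hls', hp'⟩ := ih'
    exact ⟨some (x, b) :: (ls ++ some (x, !b) :: ls'), mk_reduceOption_cancel hls hls',
      .cons hl (hp.append (.cons hl' hp'))⟩

theorem Path.balanced {p q : Q} {ls : List (Option (X × Bool))} {w : List α}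
    (h : Path δ p ls w q) (hls : FreeGroup.mk ls.reduceOption = 1) : Balanced δ p w q := by
  induction hn : ls.length using Nat.strong_induction_on generalizing ls p q w with
  | _ n ih =>
    subst hn
    rcases h with _ | @⟨_, _, _, _, _ | ⟨x, b⟩, ls, _, hl, hp⟩
    · exact .nil p
    · exact .silent hl (ih _ (Nat.lt_succ_self _) hp hls rfl)
    rw [mk_eq_one_iff_red_nil, List.reduceOption_cons_of_some, Red.cons_nil_iff_singleton] at hls
    obtain ⟨l₁, l₂, rfl, h₁, h₂⟩ := exists_append_cons_of_red_reduceOption hls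
    rw [← mk_eq_one_iff_red_nil] at h₁ h₂
    obtain ⟨q', v, _, hv, hp', rfl⟩ := path_append_iff.mp hp
    obtain ⟨τ, r, u, hl', hu, rfl⟩ := path_cons_iff.mp hp'
    exact .cancel hl (ih _ (by grind) hv h₁ rfl) hl' (ih _ (by grind) hu h₂ rfl)

theorem exists_balanced_iff {p : Q} {acc : Set Q} {w : List α} :
    (∃ q ∈ acc, Balanced δ p w q) ↔
      ∃ ls, FreeGroup.mk ls.reduceOption = 1 ∧ ∃ q ∈ acc, Path δ p ls w q := by
  constructor
  · rintro ⟨q, hq, h⟩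
    obtain ⟨ls, hls, hp⟩ := h.exists_path
    exact ⟨ls, hls, q, hq, hp⟩
  · rintro ⟨ls, hls, q, hq, h⟩
    exact ⟨q, hq, h.balanced hls⟩

end Balanced

section Letterwise

open FreeGroup

variable {α Q X : Type*} [DecidableEq X]

/-- Transitions multiplying the register of a free group by at most one letter at a time, which
simulate `δ`: the state also holds the word still to be multiplied by. When it is empty, there is a
harmless silent loop. -/
def letterwise (δ : Set (Q × Option α × Q × FreeGroup X)) :
    Set ((Q × List (X × Bool)) × Option α × (Q × List (X × Bool)) × Option (X × Bool)) :=
  (fun t => ((t.1, []), t.2.1, (t.2.2.1, t.2.2.2.toWord), none)) '' δ ∪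
    ⋃ t ∈ δ, (fun l => ((t.2.2.1, l), none, (t.2.2.1, l.tail), l.head?)) ''
      {l | l <:+ t.2.2.2.toWord}

variable {δ : Set (Q × Option α × Q × FreeGroup X)}

theorem finite_letterwise (hδ : δ.Finite) : (letterwise δ).Finite := by
  refine (hδ.image _).union (hδ.biUnion fun t _ => .image _ ?_)
  simpa only [← List.mem_tails] using List.finite_toSet t.2.2.2.toWord.tails

theorem exists_path_of_path_letterwise {p q : Q × List (X × Bool)}
    {ls : List (Option (X × Bool))} {w : List α} (h : Path (letterwise δ) p ls w q)
    (hq : q.2 = []) :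
    ∃ ms, Path δ p.1 ms w q.1 ∧ FreeGroup.mk ls.reduceOption = FreeGroup.mk p.2 * ms.prod := by
  induction h with
  | nil p => exact ⟨[], .nil p.1, by rw [hq]; rfl⟩
  | cons hl _ ih =>
    obtain ⟨ms, hp, hms⟩ := ih hq
    rcases hl with ⟨⟨p, σ, q, m⟩, ht, ⟨⟩⟩ | hl
    · refine ⟨m :: ms, .cons ht hp, ?_⟩
      rw [List.reduceOption_cons_of_none, hms, mk_toWord, List.prod_cons, ← one_eq_mk, one_mul]
    · simp only [Set.mem_iUnion] at hl
      obtain ⟨t, -, l, -, ⟨⟩⟩ := hl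
      refine ⟨ms, hp, ?_⟩
      rcases l with _ | ⟨a, l⟩
      · exact hms
      · rw [List.head?_cons, List.reduceOption_cons_of_some, ← List.singleton_append, ← mul_mk, hms,
          List.tail_cons, ← mul_assoc, mul_mk, List.singleton_append]

theorem path_letterwise_of_suffix {t : Q × Option α × Q × FreeGroup X} (ht : t ∈ δ)
    {l : List (X × Bool)} (hl : l <:+ t.2.2.2.toWord) :
    Path (letterwise δ) (t.2.2.1, l) (l.map some) [] (t.2.2.1, []) := by
  induction l with
  | nil => exact .nil _
  | cons a l ih =>
    exact .cons (σ := none) (.inr (Set.mem_biUnion ht ⟨a :: l, hl, rfl⟩))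
      (ih ((List.suffix_cons a l).trans hl))

theorem Path.exists_path_letterwise {p q : Q} {ms : List (FreeGroup X)} {w : List α}
    (h : Path δ p ms w q) :
    ∃ ls, Path (letterwise δ) (p, []) ls w (q, []) ∧ FreeGroup.mk ls.reduceOption = ms.prod := by
  induction h with
  | nil p => exact ⟨[], .nil _, rfl⟩
  | @cons _ _ _ _ m _ _ ht _ ih =>
    obtain ⟨ls, hp, hls⟩ := ih
    refine ⟨none :: (m.toWord.map some ++ ls), .cons (.inl ⟨_, ht, rfl⟩)
      ((path_letterwise_of_suffix ht List.suffix_rfl).append hp), ?_⟩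
    have hm : (m.toWord.map some).reduceOption = m.toWord := by simp [List.reduceOption]
    rw [List.reduceOption_cons_of_none, List.reduceOption_append, hm, ← mul_mk, mk_toWord, hls,
      List.prod_cons]

theorem exists_balanced_letterwise_iff {q₀ : Q} {acc : Set Q} {w : List α} :
    (∃ q ∈ acc ×ˢ {[]}, Balanced (letterwise δ) (q₀, []) w q) ↔
      ∃ ms : List (FreeGroup X), ms.prod = 1 ∧ ∃ q ∈ acc, Path δ q₀ ms w q := by
  rw [exists_balanced_iff]
  constructor
  · rintro ⟨ls, hls, ⟨q, _⟩, ⟨hq, rfl⟩, h⟩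
    obtain ⟨ms, hp, hms⟩ := exists_path_of_path_letterwise h rfl
    refine ⟨ms, ?_, q, hq, hp⟩
    rwa [hls, ← one_eq_mk, one_mul, eq_comm] at hms
  · rintro ⟨ms, hms, q, hq, h⟩
    obtain ⟨ls, hp, hls⟩ := h.exists_path_letterwise
    exact ⟨ls, hls.trans hms, (q, []), ⟨hq, rfl⟩, hp⟩

end Letterwise

end GAutomaton

/-! ### From free-group automata to grammars -/

section Interpretation

variable {T N : Type*}

/-- The language denoted by a symbol, when each nonterminal `n` denotes the language `val n`. -/
def symbolLang (val : N → Language T) : Symbol T N → Language T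
  | .terminal a => {[a]}
  | .nonterminal n => val n

/-- The language denoted by a sentential form, when each nonterminal `n` denotes `val n`. -/
def formLang (val : N → Language T) (u : List (Symbol T N)) : Language T :=
  (u.map (symbolLang val)).prod

variable {val : N → Language T}

theorem mem_formLang_nil {w : List T} : w ∈ formLang val [] ↔ w = [] :=
  Iff.rfl

theorem mem_formLang_terminal_cons {a : T} {u : List (Symbol T N)} {w : List T} :
    w ∈ formLang val (.terminal a :: u) ↔ ∃ v ∈ formLang val u, w = a :: v := by
  rw [formLang, List.map_cons, List.prod_cons, Language.mem_mul]
  constructor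
  · rintro ⟨_, rfl, v, hv, rfl⟩
    exact ⟨v, hv, rfl⟩
  · rintro ⟨v, hv, rfl⟩
    exact ⟨[a], rfl, v, hv, rfl⟩

theorem formLang_append (u v : List (Symbol T N)) :
    formLang val (u ++ v) = formLang val u * formLang val v := by
  simp [formLang]

theorem formLang_nonterminal (n : N) : formLang val [.nonterminal n] = val n := by
  simp [formLang, symbolLang]

theorem mem_formLang_nonterminal_cons {n : N} {u : List (Symbol T N)} {w : List T} :
    w ∈ formLang val (.nonterminal n :: u) ↔
      ∃ v ∈ val n, ∃ v' ∈ formLang val u, v ++ v' = w := by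
  rw [← List.singleton_append, formLang_append, formLang_nonterminal, Language.mem_mul]

theorem mem_formLang_map_terminal_append {u : List (Symbol T N)} {v w : List T} :
    w ∈ formLang val (v.map Symbol.terminal ++ u) ↔ ∃ v' ∈ formLang val u, w = v ++ v' := by
  induction v generalizing w with
  | nil => simp
  | cons a v ih => simp [mem_formLang_terminal_cons, ih]

theorem mem_formLang_of_derives {g : ContextFreeGrammar T} {val : g.NT → Language T}
    (hval : ∀ r ∈ g.rules, formLang val r.output ≤ val r.input)
    {u : List (Symbol T g.NT)} {w : List T} (h : g.Derives u (w.map Symbol.terminal)) :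
    w ∈ formLang val u := by
  induction h using Relation.ReflTransGen.head_induction_on with
  | refl =>
    rw [← List.append_nil (w.map _), mem_formLang_map_terminal_append]
    exact ⟨[], rfl, (List.append_nil w).symm⟩
  | head hp _ ih =>
    obtain ⟨r, hr, hrw⟩ := hp
    obtain ⟨p, q, rfl, rfl⟩ := hrw.exists_parts
    have hle : formLang val (p ++ r.output ++ q) ≤
        formLang val (p ++ [Symbol.nonterminal r.input] ++ q) := by
      simp only [formLang_append, formLang_nonterminal]
      gcongr
      exact hval r hr
    exact hle ih

theorem mem_val_of_derives {g : ContextFreeGrammar T} {val : g.NT → Language T}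
    (hval : ∀ r ∈ g.rules, formLang val r.output ≤ val r.input) {n : g.NT} {w : List T}
    (h : g.Derives [.nonterminal n] (w.map Symbol.terminal)) : w ∈ val n := by
  rw [← formLang_nonterminal (val := val) n]
  exact mem_formLang_of_derives hval h

theorem derives_of_mem_rules {g : ContextFreeGrammar T} {r : ContextFreeRule T g.NT}
    (hr : r ∈ g.rules) : g.Derives [.nonterminal r.input] r.output :=
  ContextFreeGrammar.Produces.single ⟨r, hr, .input_output⟩

theorem derives_append {g : ContextFreeGrammar T} {u u' v v' : List (Symbol T g.NT)}
    (hu : g.Derives u u') (hv : g.Derives v v') : g.Derives (u ++ v) (u' ++ v') :=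
  (hu.append_right v).trans (hv.append_left u')

end Interpretation

section BalancedGrammar

open GAutomaton

variable {α Q X : Type*} {δ : Set (Q × Option α × Q × Option (X × Bool))} {q₀ : Q} {acc : Set Q}

/-- The rules of a grammar with start symbol `none`, in which the nonterminal `some (p, q)`
generates the words read on balanced paths from `p` to `q`. -/
inductive BalancedRule (δ : Set (Q × Option α × Q × Option (X × Bool))) (q₀ : Q) (acc : Set Q) :
    ContextFreeRule α (Option (Q × Q)) → Prop
  | start {q : Q} : q ∈ acc → BalancedRule δ q₀ acc ⟨none, [.nonterminal (some (q₀, q))]⟩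
  | nil (p : Q) : BalancedRule δ q₀ acc ⟨some (p, p), []⟩
  | silent {p q : Q} {σ : Option α} (r : Q) : (p, σ, q, none) ∈ δ →
      BalancedRule δ q₀ acc
        ⟨some (p, r), σ.toList.map .terminal ++ [.nonterminal (some (q, r))]⟩
  | cancel {p p' q q' : Q} {σ τ : Option α} {x : X} {b : Bool} (r : Q) :
      (p, σ, p', some (x, b)) ∈ δ → (q', τ, q, some (x, !b)) ∈ δ →
      BalancedRule δ q₀ acc
        ⟨some (p, r), σ.toList.map .terminal ++ (.nonterminal (some (p', q')) ::
          (τ.toList.map .terminal ++ [.nonterminal (some (q, r))]))⟩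

theorem finite_balancedRule [Finite Q] (hδ : δ.Finite) :
    {r | BalancedRule δ q₀ acc r}.Finite := by
  let N (p q : Q) : Symbol α (Option (Q × Q)) := .nonterminal (some (p, q))
  let word (σ : Option α) : List (Symbol α (Option (Q × Q))) := σ.toList.map .terminal
  have hstart := Set.finite_range fun q => (⟨none, [N q₀ q]⟩ : ContextFreeRule α _)
  have hnil := Set.finite_range fun p : Q => (⟨some (p, p), []⟩ : ContextFreeRule α _)
  have hsilent := hδ.image2 (fun t r =>
    (⟨some (t.1, r), word t.2.1 ++ [N t.2.2.1 r]⟩ : ContextFreeRule α _)) (Set.finite_univ (α := Q))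
  have hcancel := (hδ.prod hδ).image2 (fun t r =>
    (⟨some (t.1.1, r), word t.1.2.1 ++ (N t.1.2.2.1 t.2.1 :: (word t.2.2.1 ++ [N t.2.2.2.1 r]))⟩ :
      ContextFreeRule α _)) (Set.finite_univ (α := Q))
  refine (((hstart.union hnil).union hsilent).union hcancel).subset ?_
  rintro _ (@⟨q, -⟩ | p | ⟨r, ht⟩ | ⟨r, ht, ht'⟩)
  · exact .inl (.inl (.inl ⟨q, rfl⟩))
  · exact .inl (.inl (.inr ⟨p, rfl⟩))
  · exact .inl (.inr ⟨_, ht, r, trivial, rfl⟩)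
  · exact .inr ⟨(_, _), ⟨ht, ht'⟩, r, trivial, rfl⟩

/-- The interpretation of the nonterminals of the balanced grammar. -/
def balancedLang (δ : Set (Q × Option α × Q × Option (X × Bool))) (q₀ : Q) (acc : Set Q) :
    Option (Q × Q) → Language α
  | none => {w | ∃ q ∈ acc, Balanced δ q₀ w q}
  | some (p, q) => {w | Balanced δ p w q}

theorem formLang_balancedLang_le {r : ContextFreeRule α (Option (Q × Q))}
    (hr : BalancedRule δ q₀ acc r) :
    formLang (balancedLang δ q₀ acc) r.output ≤ balancedLang δ q₀ acc r.input := by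
  intro w hw
  cases hr with
  | start hq =>
    rw [formLang_nonterminal] at hw
    exact ⟨_, hq, hw⟩
  | nil p => exact mem_formLang_nil.mp hw ▸ .nil p
  | silent r ht =>
    obtain ⟨v, hv, rfl⟩ := mem_formLang_map_terminal_append.mp hw
    rw [formLang_nonterminal] at hv
    exact .silent ht hv
  | cancel r ht ht' =>
    obtain ⟨_, hw', rfl⟩ := mem_formLang_map_terminal_append.mp hw
    obtain ⟨v, hv, _, hu', rfl⟩ := mem_formLang_nonterminal_cons.mp hw'
    obtain ⟨u, hu, rfl⟩ := mem_formLang_map_terminal_append.mp hu'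
    rw [formLang_nonterminal] at hu
    exact .cancel ht hv ht' hu

/-- The grammar of the words read on balanced paths from `q₀` to `acc`. -/
noncomputable def balancedGrammar {Q : Type} [Finite Q]
    {δ : Set (Q × Option α × Q × Option (X × Bool))} (hδ : δ.Finite) (q₀ : Q) (acc : Set Q) :
    ContextFreeGrammar α where
  NT := Option (Q × Q)
  initial := none
  rules := (finite_balancedRule (q₀ := q₀) (acc := acc) hδ).toFinset

section

variable {Q : Type} [Finite Q] {δ : Set (Q × Option α × Q × Option (X × Bool))} {hδ : δ.Finite}
  {q₀ : Q} {acc : Set Q}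

theorem mem_rules_balancedGrammar_iff {r : ContextFreeRule α (Option (Q × Q))} :
    r ∈ (balancedGrammar hδ q₀ acc).rules ↔ BalancedRule δ q₀ acc r :=
  Set.Finite.mem_toFinset _

theorem BalancedRule.derives {r : ContextFreeRule α (Option (Q × Q))}
    (hr : BalancedRule δ q₀ acc r) :
    (balancedGrammar hδ q₀ acc).Derives [.nonterminal r.input] r.output :=
  derives_of_mem_rules (mem_rules_balancedGrammar_iff.mpr hr)

theorem GAutomaton.Balanced.derives {p q : Q} {w : List α} (h : Balanced δ p w q) :
    (balancedGrammar hδ q₀ acc).Derives [.nonterminal (some (p, q))] (w.map .terminal) := by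
  induction h with
  | nil p => exact (BalancedRule.nil p).derives
  | silent ht _ ih =>
    rw [List.map_append]
    exact (BalancedRule.silent _ ht).derives.trans (ih.append_left _)
  | cancel ht _ ht' _ ih ih' =>
    simp only [List.map_append]
    exact (BalancedRule.cancel _ ht ht').derives.trans
      ((derives_append ih (ih'.append_left _)).append_left _)

theorem mem_language_balancedGrammar_iff {w : List α} :
    w ∈ (balancedGrammar hδ q₀ acc).language ↔ ∃ q ∈ acc, Balanced δ q₀ w q := by
  rw [ContextFreeGrammar.mem_language_iff]
  constructor
  · intro h
    have hval (r) (hr : r ∈ (balancedGrammar hδ q₀ acc).rules) :=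
      formLang_balancedLang_le (mem_rules_balancedGrammar_iff.mp hr)
    exact mem_val_of_derives hval h
  · rintro ⟨q, hq, h⟩
    exact (BalancedRule.start hq).derives.trans h.derives

end

theorem isContextFree_of_balanced (hδ : δ.Finite) {L : Language α}
    (hL : ∀ w, w ∈ L ↔ ∃ q ∈ acc, Balanced δ q₀ w q) : L.IsContextFree := by
  obtain ⟨n, δ', q₀', acc', hδ', hpath⟩ := exists_fin_path_iff hδ q₀ acc
  have hbalanced (w) : (∃ q ∈ acc', Balanced δ' q₀' w q) ↔ ∃ q ∈ acc, Balanced δ q₀ w q := by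
    simp only [exists_balanced_iff, hpath]
  refine ⟨balancedGrammar hδ' q₀' acc', Set.ext fun w => ?_⟩
  exact mem_language_balancedGrammar_iff.trans ((hbalanced w).trans (hL w).symm)

theorem GRecognizable.isContextFree {L : Language α} (h : GRecognizable (FreeGroup X) L) :
    L.IsContextFree := by
  classical
  obtain ⟨M, rfl⟩ := h
  exact isContextFree_of_balanced (finite_letterwise M.finδ)
    fun w => mem_lang_iff.trans exists_balanced_letterwise_iff.symm

end BalancedGrammar

/-! ### From grammars to free-group automata -/

namespace RecursiveDescent

open GAutomaton

variable {α : Type*} {g : ContextFreeGrammar α}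

/-- The states of the recursive-descent automaton of a grammar: the forms still to be parsed.
Besides the tails of right-hand sides, they include the right-hand sides from which symbols deriving
the empty word have been erased. -/
def forms (g : ContextFreeGrammar α) : Set (List (Symbol α g.NT)) :=
  insert [.nonterminal g.initial] (insert [] (⋃ r ∈ g.rules, {s | s.Sublist r.output}))

theorem finite_forms : (forms g).Finite := by
  refine ((g.rules.finite_toSet.biUnion fun r _ => ?_).insert _).insert _
  simpa only [← List.mem_sublists] using List.finite_toSet r.output.sublists

theorem nil_mem_forms : [] ∈ forms g :=
  .inr (.inl rfl)

theorem initial_mem_forms : [.nonterminal g.initial] ∈ forms g :=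
  .inl rfl

theorem mem_forms_of_sublist_output {r : ContextFreeRule α g.NT} (hr : r ∈ g.rules)
    {s : List (Symbol α g.NT)} (hs : s.Sublist r.output) : s ∈ forms g :=
  .inr (.inr (Set.mem_biUnion hr hs))

theorem mem_forms_of_cons_mem {x : Symbol α g.NT} {s : List (Symbol α g.NT)}
    (h : x :: s ∈ forms g) : s ∈ forms g := by
  rcases h with h | h | h
  · exact (List.cons.inj h).2 ▸ nil_mem_forms
  · cases h
  · simp only [Set.mem_iUnion] at h
    obtain ⟨r, hr, h⟩ := h
    exact mem_forms_of_sublist_output hr ((List.sublist_cons_self x s).trans h)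

/-- The recursive-descent transitions: read a terminal; replace a nonterminal `n` by a form derived
from it, pushing the rest `r` of the current form; return to a form, popping it. A form plays the
role of a stack symbol, that is, of a letter. -/
inductive Descent (g : ContextFreeGrammar α) :
    forms g × Option α × forms g × Option (forms g × Bool) → Prop
  | read {a : α} {s t : forms g} : s.1 = .terminal a :: t.1 → Descent g (s, some a, t, none)
  | call {n : g.NT} {s t r : forms g} : s.1 = .nonterminal n :: r.1 →
      g.Derives [.nonterminal n] t.1 → Descent g (s, none, t, some (r, true))
  | ret {s r : forms g} : s.1 = [] → Descent g (s, none, r, some (r, false))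

/-- The set of recursive-descent transitions. -/
def descent (g : ContextFreeGrammar α) :
    Set (forms g × Option α × forms g × Option (forms g × Bool)) :=
  {t | Descent g t}

theorem finite_descent : (descent g).Finite := by
  have := finite_forms (g := g).to_subtype
  refine .of_injOn (f := fun t => (t.1, t.2.2)) (t := Set.univ) (fun _ _ => trivial) ?_
    Set.finite_univ
  rintro _ (h | _ | _) _ (h' | _ | _) heq <;> grind

theorem derives_of_balanced {s s' : forms g} {w : List α} (h : Balanced (descent g) s w s') :
    ∃ u, s.1 = u ++ s'.1 ∧ g.Derives u (w.map .terminal) := by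
  induction h with
  | nil s => exact ⟨[], rfl, .refl _⟩
  | silent hl _ ih =>
    obtain ⟨u, hu, h⟩ := ih
    obtain @⟨a, _, _, hs⟩ := hl
    exact ⟨.terminal a :: u, by rw [hs, hu]; rfl, h.append_left [.terminal a]⟩
  | @cancel s p q' q r σ τ x b v w hl _ hl' _ ih ih' =>
    obtain ⟨u, hu, h⟩ := ih
    obtain ⟨u', hu', h'⟩ := ih'
    cases hl with
    | @call n _ _ _ hs hn =>
      obtain _ | _ | hq := hl'
      rw [hq, List.append_nil] at hu
      refine ⟨.nonterminal n :: u', by rw [hs, hu']; rfl, ?_⟩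
      simpa using derives_append (hn.trans (hu ▸ h)) h'
    | ret hs =>
      obtain _ | hq | _ := hl'
      have := congrArg List.length (hu.trans (congrArg (u ++ ·) hq))
      grind

/-- `ParsedIn s w k`: the automaton parses `w` as the form `s` in `k` steps, leaving the stack as it
found it. -/
def ParsedIn (s : forms g) (w : List α) (k : ℕ) : Prop :=
  ∃ ls, FreeGroup.mk ls.reduceOption = 1 ∧ Path (descent g) s ls w ⟨[], nil_mem_forms⟩ ∧
    ls.length = k

theorem ParsedIn.nil : ParsedIn (⟨[], nil_mem_forms⟩ : forms g) [] 0 :=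
  ⟨[], rfl, .nil _, rfl⟩

theorem ParsedIn.read {a : α} {s t : forms g} {w : List α} {k : ℕ}
    (hs : s.1 = .terminal a :: t.1) (h : ParsedIn t w k) : ParsedIn s (a :: w) (k + 1) := by
  obtain ⟨ls, hls, hp, rfl⟩ := h
  exact ⟨none :: ls, hls, .cons (Descent.read hs) hp, rfl⟩

theorem ParsedIn.call {n : g.NT} {s t r : forms g} {v w : List α} {k k' : ℕ}
    (hs : s.1 = .nonterminal n :: r.1) (hn : g.Derives [.nonterminal n] t.1)
    (ht : ParsedIn t v k) (hr : ParsedIn r w k') : ParsedIn s (v ++ w) (k + k' + 2) := by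
  obtain ⟨ls, hls, hp, rfl⟩ := ht
  obtain ⟨ls', hls', hp', rfl⟩ := hr
  exact ⟨some (r, true) :: (ls ++ some (r, false) :: ls'), mk_reduceOption_cancel hls hls',
    .cons (Descent.call hs hn) (hp.append (.cons (Descent.ret rfl) hp')), by grind⟩

/-- The words that a call replacing `n` by a suitable form parses within five steps per letter. Two
of the four extra steps pay for the call and the return, and the other two for the occurrence of `n`
in the form that makes the call. -/
def callLang (g : ContextFreeGrammar α) (n : g.NT) : Language α :=
  {w | ∃ t : forms g, g.Derives [.nonterminal n] t.1 ∧ ∃ k, ParsedIn t w k ∧ k + 4 ≤ 5 * w.length}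

theorem exists_parsedIn_of_mem_formLang {s : forms g} {w : List α}
    (h : w ∈ formLang (callLang g) s.1) :
    ∃ k, ParsedIn s w k ∧ k + 2 * s.1.length ≤ 5 * w.length := by
  obtain ⟨s, hs⟩ := s
  induction s generalizing w with
  | nil => exact ⟨0, mem_formLang_nil.mp h ▸ .nil, by simp⟩
  | cons x s ih =>
    have hs' := mem_forms_of_cons_mem hs
    cases x with
    | terminal a =>
      obtain ⟨v, hv, rfl⟩ := mem_formLang_terminal_cons.mp h
      obtain ⟨k, hk, hle⟩ := ih hs' hv
      exact ⟨k + 1, .read rfl hk, by grind⟩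
    | nonterminal n =>
      obtain ⟨u, ⟨t, hn, k, hk, hle⟩, v, hv, rfl⟩ := mem_formLang_nonterminal_cons.mp h
      obtain ⟨k', hk', hle'⟩ := ih hs' hv
      exact ⟨k + k' + 2, .call rfl hn hk hk', by grind⟩

/-- The words parsed as `n` within five steps per letter, together with the empty word if `n`
derives it. Parsing the empty word would take time but read nothing, so it is never called for:
forms omit the symbols that are to derive it. -/
def parseLang (g : ContextFreeGrammar α) (n : g.NT) : Language α :=
  {w | w ∈ callLang g n ∨ w = [] ∧ g.Derives [.nonterminal n] []}

theorem exists_sublist_of_mem_formLang {u : List (Symbol α g.NT)} {w : List α}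
    (h : w ∈ formLang (parseLang g) u) :
    ∃ s : List (Symbol α g.NT), s.Sublist u ∧ g.Derives u s ∧ w ∈ formLang (callLang g) s := by
  induction u generalizing w with
  | nil => exact ⟨[], .refl _, .refl _, h⟩
  | cons x u ih =>
    cases x with
    | terminal a =>
      obtain ⟨v, hv, rfl⟩ := mem_formLang_terminal_cons.mp h
      obtain ⟨s, hs, hd, hv⟩ := ih hv
      exact ⟨.terminal a :: s, hs.cons_cons _, hd.append_left [.terminal a],
        mem_formLang_terminal_cons.mpr ⟨v, hv, rfl⟩⟩
    | nonterminal n =>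
      obtain ⟨v, hn, v', hv', rfl⟩ := mem_formLang_nonterminal_cons.mp h
      obtain ⟨s, hs, hd, hv'⟩ := ih hv'
      rcases hn with hn | ⟨rfl, hn⟩
      · exact ⟨.nonterminal n :: s, hs.cons_cons _, hd.append_left [.nonterminal n],
          mem_formLang_nonterminal_cons.mpr ⟨v, hn, v', hv', rfl⟩⟩
      · exact ⟨s, hs.cons _, derives_append hn hd, hv'⟩

theorem formLang_parseLang_le {r : ContextFreeRule α g.NT} (hr : r ∈ g.rules) :
    formLang (parseLang g) r.output ≤ parseLang g r.input := by
  intro w hw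
  obtain ⟨s, hsub, hd, hw⟩ := exists_sublist_of_mem_formLang hw
  have hs : s ∈ forms g := mem_forms_of_sublist_output hr hsub
  have hn : g.Derives [.nonterminal r.input] s := (derives_of_mem_rules hr).trans hd
  match s, hs with
  | [], _ => exact .inr ⟨hw, hn⟩
  | [.terminal a], hs =>
    obtain ⟨_, rfl, rfl⟩ := mem_formLang_terminal_cons.mp hw
    exact .inl ⟨⟨_, hs⟩, hn, 1, .read rfl .nil, by simp⟩
  | [.nonterminal m], _ =>
    rw [formLang_nonterminal] at hw
    obtain ⟨t, hm, ht⟩ := hw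
    exact .inl ⟨t, hn.trans hm, ht⟩
  | x :: y :: s, hs =>
    obtain ⟨k, hk, hle⟩ := exists_parsedIn_of_mem_formLang (s := ⟨_, hs⟩) hw
    exact .inl ⟨⟨_, hs⟩, hn, k, hk, by grind⟩

theorem exists_parsedIn_initial {w : List α} (hw : w ∈ g.language) :
    ∃ k ≤ 5 * w.length + 5,
      ParsedIn (⟨[.nonterminal g.initial], initial_mem_forms⟩ : forms g) w k := by
  have h : w ∈ parseLang g g.initial := mem_val_of_derives (fun r hr => formLang_parseLang_le hr) hw
  rcases h with ⟨t, hn, k, hk, hle⟩ | ⟨rfl, hn⟩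
  · exact ⟨k + 0 + 2, by lia, by simpa using hk.call rfl hn .nil⟩
  · exact ⟨0 + 0 + 2, by lia, ParsedIn.nil.call (t := ⟨[], nil_mem_forms⟩) rfl hn .nil⟩

theorem mem_language_of_balanced {w : List α}
    (h : Balanced (descent g) ⟨[.nonterminal g.initial], initial_mem_forms⟩ w ⟨[], nil_mem_forms⟩) :
    w ∈ g.language := by
  obtain ⟨u, hu, h⟩ := derives_of_balanced h
  obtain rfl : [.nonterminal g.initial] = u := by simpa using hu
  exact h

theorem exists_balanced_initial_iff {w : List α} :
    (∃ s ∈ ({⟨[], nil_mem_forms⟩} : Set (forms g)),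
      Balanced (descent g) ⟨[.nonterminal g.initial], initial_mem_forms⟩ w s) ↔
      w ∈ g.language := by
  constructor
  · rintro ⟨_, rfl, h⟩
    exact mem_language_of_balanced h
  · intro hw
    obtain ⟨_, _, ls, hls, hp, -⟩ := exists_parsedIn_initial hw
    exact ⟨_, rfl, hp.balanced hls⟩

end RecursiveDescent

section LinearTime

open GAutomaton RecursiveDescent

theorem prod_map_mk_toList {X : Type*} (ls : List (Option (X × Bool))) :
    (ls.map fun o => FreeGroup.mk o.toList).prod = FreeGroup.mk ls.reduceOption := by
  induction ls with
  | nil => rfl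
  | cons o ls ih => cases o <;> simp [ih, FreeGroup.mul_mk]

theorem gRecognizableLinTime_freeGroup_forms {α : Type*} (g : ContextFreeGrammar α) :
    GRecognizableLinTime (FreeGroup (forms g)) g.language := by
  let δ := mapLabel (fun o : Option (forms g × Bool) => FreeGroup.mk o.toList) (descent g)
  have hδ : δ.Finite := finite_descent.image _
  obtain ⟨M, hM⟩ := exists_acceptsIn_iff hδ ⟨[.nonterminal g.initial], initial_mem_forms⟩
    {⟨[], nil_mem_forms⟩}
  refine ⟨5, M, ?_, fun w hw => ?_⟩
  · ext w
    rw [← exists_balanced_initial_iff]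
    constructor
    · rintro ⟨t, h⟩
      obtain ⟨_, -, hprod, s, hs, h⟩ := (hM w t).mp h
      obtain ⟨ls, rfl, hp⟩ := path_mapLabel_iff.mp h
      exact ⟨s, hs, hp.balanced (prod_map_mk_toList ls ▸ hprod)⟩
    · rintro ⟨s, hs, h⟩
      obtain ⟨ls, hls, hp⟩ := h.exists_path
      exact ⟨_, (hM w _).mpr ⟨_, le_rfl, (prod_map_mk_toList ls).trans hls, s, hs,
        path_mapLabel_iff.mpr ⟨ls, rfl, hp⟩⟩⟩
  · obtain ⟨k, hk, ls, hls, hp, rfl⟩ := exists_parsedIn_initial hw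
    exact (hM w _).mpr ⟨_, by rwa [List.length_map], (prod_map_mk_toList ls).trans hls, _, rfl,
      path_mapLabel_iff.mpr ⟨ls, rfl, hp⟩⟩

end LinearTime

section FreeGroupEmbedding

open FreeGroup

/-- The action of `ℤ` on the free group with basis `ℤ` by shifting the basis. -/
def freeGroupShift : Multiplicative ℤ →* MulAut (FreeGroup ℤ) :=
  zpowersHom (MulAut (FreeGroup ℤ)) (freeGroupCongr (Equiv.addRight 1))

theorem freeGroupShift_of_zero (n : ℤ) : freeGroupShift (.ofAdd n) (of 0) = of n := by
  let e : MulAut (FreeGroup ℤ) := freeGroupCongr (Equiv.addRight 1)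
  have he (m : ℤ) : e (of m) = of (m + 1) := by simp [e, freeGroupCongr]
  have he' (m : ℤ) : e⁻¹ (of m) = of (m - 1) := by
    rw [MulAut.inv_def, MulEquiv.symm_apply_eq, he, sub_add_cancel]
  change (e ^ n) (of 0) = of n
  induction n with
  | zero => simp
  | succ n ih => rw [add_comm, zpow_add, zpow_one, MulAut.mul_apply, ih, he, add_comm]
  | pred n ih =>
    rw [sub_eq_neg_add, zpow_add, zpow_neg_one, MulAut.mul_apply, ih, he', sub_eq_neg_add]

/-- The homomorphism `ψ` to `FreeGroup ℤ ⋊ ℤ` below sends `aⁿ b a⁻ⁿ` to the `n`-th basis element. -/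
theorem injective_lift_conj_zpow :
    Function.Injective (lift fun n : ℤ => of (0 : Fin 2) ^ n * of 1 * (of 0 ^ n)⁻¹) := by
  let ψ : FreeGroup (Fin 2) →* FreeGroup ℤ ⋊[freeGroupShift] Multiplicative ℤ :=
    lift ![SemidirectProduct.inr (.ofAdd 1), SemidirectProduct.inl (of 0)]
  have hψ : ψ.comp (lift fun n : ℤ => of (0 : Fin 2) ^ n * of 1 * (of 0 ^ n)⁻¹) =
      SemidirectProduct.inl := by
    ext1 n
    have hzpow : (SemidirectProduct.inr (.ofAdd 1) :
        FreeGroup ℤ ⋊[freeGroupShift] Multiplicative ℤ) ^ n =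
          SemidirectProduct.inr (.ofAdd n) := by
      rw [← map_zpow, ← ofAdd_zsmul, smul_eq_mul, mul_one]
    simp only [MonoidHom.comp_apply, lift_apply_of, _root_.map_mul, _root_.map_inv, map_zpow, ψ,
      Matrix.cons_val_zero, Matrix.cons_val_one, hzpow]
    rw [← _root_.map_inv, ← SemidirectProduct.inl_aut, freeGroupShift_of_zero]
  have hinj : Function.Injective (ψ.comp _) := hψ ▸ SemidirectProduct.inl_injective
  exact Function.Injective.of_comp hinj

theorem exists_injective_hom_freeGroup_fin_two (X : Type*) [Countable X] :
    ∃ f : FreeGroup X →* FreeGroup (Fin 2), Function.Injective f := by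
  obtain ⟨e, he⟩ := Countable.exists_injective_nat X
  exact ⟨(lift _).comp (map fun x => (e x : ℤ)), injective_lift_conj_zpow.comp
    (map_injective (Int.ofNat_injective.comp he))⟩

end FreeGroupEmbedding

theorem isContextFree_iff_gRecognizableLinTime {α : Type*} {L : Language α} :
    L.IsContextFree ↔ GRecognizableLinTime (FreeGroup (Fin 2)) L := by
  constructor
  · rintro ⟨g, rfl⟩
    have := RecursiveDescent.finite_forms (g := g).countable.to_subtype
    obtain ⟨f, hf⟩ := exists_injective_hom_freeGroup_fin_two (RecursiveDescent.forms g)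
    obtain ⟨C, hC⟩ := gRecognizableLinTime_freeGroup_forms g
    exact ⟨C, hC.of_injective hf⟩
  · rintro ⟨C, M, hM, -⟩
    exact GRecognizable.isContextFree ⟨M, hM⟩

/-! ### Free subgroups of finite index -/

section Index

variable {G : Type*} [Group G]

open scoped Pointwise in
/-- The image of `R` in `G ⧸ H` is stable under `S`, hence under the group `S` generates, which acts
transitively. -/
theorem finiteIndex_of_closure_eq_top {H : Subgroup G} {S R : Set G}
    (hS : Subgroup.closure S = ⊤) (hfin : R.Finite) (hne : R.Nonempty)
    (h : ∀ s ∈ S, ∀ r ∈ R, ∃ r' ∈ R, r'⁻¹ * (s * r) ∈ H) : H.FiniteIndex := by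
  let F : Set (G ⧸ H) := (↑) '' R
  have hF : F.Finite := hfin.image _
  have hstab : MulAction.stabilizer G F = ⊤ := by
    rw [eq_top_iff, ← hS, Subgroup.closure_le]
    intro s hs
    refine (MulAction.mem_stabilizer_set' hF).mpr (Set.forall_mem_image.mpr fun r hr => ?_)
    obtain ⟨r', hr', hmem⟩ := h s hs r hr
    exact ⟨r', hr', QuotientGroup.eq.mpr hmem⟩
  obtain ⟨r, hr⟩ := hne
  have huniv : F = Set.univ := by
    refine Set.eq_univ_of_forall fun x => ?_
    obtain ⟨g, rfl⟩ := MulAction.exists_smul_eq G (r : G ⧸ H) x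
    have hg : g ∈ MulAction.stabilizer G F := hstab ▸ Subgroup.mem_top g
    exact (MulAction.mem_stabilizer_set' hF).mp hg ⟨r, hr, rfl⟩
  have : Finite (G ⧸ H) := Set.finite_univ_iff.mp (huniv ▸ hF)
  exact Subgroup.finiteIndex_of_finite_quotient

end Index

section Sanov

open Matrix ModularGroup UpperHalfPlane
open scoped MatrixGroups

theorem abs_re_S_smul_lt_one {z : ℍ} (hz : 1 ≤ |z.re|) : |(S • z).re| < 1 := by
  have him : 0 < z.im := z.im_pos
  have hre : (S • z).re = -z.re / (z.re * z.re + z.im * z.im) := by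
    rw [modular_S_smul, ← coe_re, coe_mk, Complex.inv_re, Complex.normSq_neg, Complex.neg_re,
      Complex.normSq_apply, coe_re, coe_im]
  have hpos : 0 < z.re * z.re + z.im * z.im :=
    add_pos_of_nonneg_of_pos (mul_self_nonneg _) (mul_pos him him)
  rw [hre, abs_div, abs_neg, abs_of_pos hpos, div_lt_one hpos]
  calc |z.re| ≤ |z.re| * |z.re| := le_mul_of_one_le_left (abs_nonneg _) hz
    _ = z.re * z.re := abs_mul_abs_self _
    _ < z.re * z.re + z.im * z.im := lt_add_of_pos_right _ (mul_pos him him)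

/-- The conjugators `1`, `S` relating the two generators of the Sanov subgroup to `T ^ 2`. -/
def sanovConj : Fin 2 → SL(2, ℤ) := ![1, S]

/-- The Sanov generators `!![1, 2; 0, 1]` and `!![1, 0; -2, 1]`, given as conjugates of `T ^ 2` so
that both act on the upper half-plane as a translation by `2` in a suitable coordinate. -/
def sanovGenerator (i : Fin 2) : SL(2, ℤ) := (sanovConj i)⁻¹ * T ^ (2 : ℤ) * sanovConj i

/-- The homomorphism from the free group of rank two onto the Sanov subgroup of `SL(2, ℤ)`. -/
def sanovHom : FreeGroup (Fin 2) →* SL(2, ℤ) := FreeGroup.lift sanovGenerator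

theorem re_sanovConj_smul_sanovGenerator_smul (i : Fin 2) (z : ℍ) :
    (sanovConj i • sanovGenerator i • z).re = (sanovConj i • z).re + 2 := by
  have h : sanovConj i * sanovGenerator i = T ^ (2 : ℤ) * sanovConj i := by
    simp only [sanovGenerator, mul_assoc, mul_inv_cancel_left]
  rw [smul_smul, h, mul_smul, re_T_zpow_smul, Int.cast_ofNat]

theorem re_sanovConj_smul_sanovGenerator_inv_smul (i : Fin 2) (z : ℍ) :
    (sanovConj i • (sanovGenerator i)⁻¹ • z).re = (sanovConj i • z).re - 2 := by
  rw [eq_sub_iff_add_eq, ← re_sanovConj_smul_sanovGenerator_smul, smul_inv_smul]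

theorem abs_re_sanovConj_smul_lt_one {i j : Fin 2} (hij : i ≠ j) {z : ℍ}
    (hz : 1 ≤ |(sanovConj i • z).re|) : |(sanovConj j • z).re| < 1 := by
  fin_cases i <;> fin_cases j
  · exact absurd rfl hij
  · change 1 ≤ |((1 : SL(2, ℤ)) • z).re| at hz
    exact abs_re_S_smul_lt_one (by rwa [one_smul] at hz)
  · change |((1 : SL(2, ℤ)) • z).re| < 1
    rw [one_smul]
    exact lt_of_not_ge fun h => hz.not_gt (abs_re_S_smul_lt_one h)
  · exact absurd rfl hij

theorem injective_sanovHom : Function.Injective sanovHom := by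
  let X (i : Fin 2) : Set ℍ := {z | 1 ≤ (sanovConj i • z).re}
  let Y (i : Fin 2) : Set ℍ := {z | (sanovConj i • z).re < -1}
  have hdisj {i j : Fin 2} (hij : i ≠ j) {s t : Set ℍ}
      (hs : ∀ z ∈ s, 1 ≤ |(sanovConj i • z).re|) (ht : ∀ z ∈ t, 1 ≤ |(sanovConj j • z).re|) :
      Disjoint s t :=
    Set.disjoint_left.mpr fun z hzs hzt =>
      (abs_re_sanovConj_smul_lt_one hij (hs z hzs)).not_ge (ht z hzt)
  have hX (i) : ∀ z ∈ X i, 1 ≤ |(sanovConj i • z).re| := fun z hz => le_abs.mpr (.inl hz)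
  have hY (i) : ∀ z ∈ Y i, 1 ≤ |(sanovConj i • z).re| :=
    fun z hz => le_abs.mpr (.inr (le_neg_of_le_neg (le_of_lt hz)))
  refine FreeGroup.injective_lift_of_ping_pong sanovGenerator X Y (fun i => ?_)
    (fun i j hij => hdisj hij (hX i) (hX j)) (fun i j hij => hdisj hij (hY i) (hY j))
    (fun i j => ?_) (fun i => ?_) (fun i => ?_)
  · refine ⟨(sanovConj i)⁻¹ • T • I, ?_⟩
    change 1 ≤ (sanovConj i • (sanovConj i)⁻¹ • T • I).re
    rw [smul_inv_smul, re_T_smul, I_re, zero_add]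
  · rcases eq_or_ne i j with rfl | hij
    · exact Set.disjoint_left.mpr fun z (hz : 1 ≤ (sanovConj i • z).re)
        (hz' : (sanovConj i • z).re < -1) => by linarith
    · exact hdisj hij (hX i) (hY j)
  · rintro _ ⟨z, hz, rfl⟩
    have hz : -1 ≤ (sanovConj i • z).re := not_lt.mp hz
    change 1 ≤ (sanovConj i • sanovGenerator i • z).re
    rw [re_sanovConj_smul_sanovGenerator_smul]
    linarith
  · rintro _ ⟨z, hz, rfl⟩
    have hz : (sanovConj i • z).re < 1 := not_le.mp hz
    change (sanovConj i • (sanovGenerator i)⁻¹ • z).re < -1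
    rw [re_sanovConj_smul_sanovGenerator_inv_smul]
    linarith

/-- Representatives, up to sign, of the cosets of the Sanov subgroup in `SL(2, ℤ)`. -/
def sanovReps : Set SL(2, ℤ) := {1, T, S, T * S, S * T, S * T * S}

theorem exists_mul_mem_sanovReps {s r : SL(2, ℤ)} (hs : s ∈ ({S, T} : Set SL(2, ℤ)))
    (hr : r ∈ sanovReps) :
    ∃ r' ∈ sanovReps, ∃ h ∈ sanovHom.range, s * r = r' * h ∨ s * r = -(r' * h) := by
  have hgen (i : Fin 2) : sanovGenerator i ∈ sanovHom.range := ⟨.of i, FreeGroup.lift_apply_of⟩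
  rcases hs with rfl | rfl <;> rcases hr with rfl | rfl | rfl | rfl | rfl | rfl
  · exact ⟨S, by simp [sanovReps], 1, one_mem _, by decide⟩
  · exact ⟨S * T, by simp [sanovReps], 1, one_mem _, by decide⟩
  · exact ⟨1, by simp [sanovReps], 1, one_mem _, by decide⟩
  · exact ⟨S * T * S, by simp [sanovReps], 1, one_mem _, by decide⟩
  · exact ⟨T, by simp [sanovReps], 1, one_mem _, by decide⟩
  · exact ⟨T * S, by simp [sanovReps], 1, one_mem _, by decide⟩
  · exact ⟨T, by simp [sanovReps], 1, one_mem _, by decide⟩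
  · exact ⟨1, by simp [sanovReps], sanovGenerator 0, hgen 0, by decide⟩
  · exact ⟨T * S, by simp [sanovReps], 1, one_mem _, by decide⟩
  · exact ⟨S, by simp [sanovReps], sanovGenerator 1, hgen 1, by decide⟩
  · exact ⟨S * T * S, by simp [sanovReps], (sanovGenerator 1)⁻¹, inv_mem (hgen 1), by decide⟩
  · exact ⟨S * T, by simp [sanovReps], (sanovGenerator 0)⁻¹, inv_mem (hgen 0), by decide⟩

open scoped Pointwise in
instance finiteIndex_range_sanovHom : sanovHom.range.FiniteIndex := by
  have hfin : sanovReps.Finite := by simp [sanovReps]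
  refine finiteIndex_of_closure_eq_top SpecialLinearGroup.SL2Z_generators
    (R := sanovReps ∪ -sanovReps) (hfin.union hfin.neg) ⟨1, by simp [sanovReps]⟩ ?_
  intro s hs r hr
  have hmem {a r' h : SL(2, ℤ)} (hh : h ∈ sanovHom.range) (ha : a = r' * h) :
      r'⁻¹ * a ∈ sanovHom.range := by rwa [ha, inv_mul_cancel_left]
  rcases hr with hr | hr <;>
    obtain ⟨r', hr', h, hh, heq | heq⟩ := exists_mul_mem_sanovReps hs hr
  · exact ⟨r', .inl hr', hmem hh heq⟩
  · exact ⟨-r', .inr (by simpa using hr'), hmem hh (by rw [heq, neg_mul])⟩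
  · exact ⟨-r', .inr (by simpa using hr'), hmem hh (by rw [neg_mul, ← heq, mul_neg, neg_neg])⟩
  · exact ⟨r', .inl hr', hmem hh (neg_injective (by rw [← heq, mul_neg]))⟩

end Sanov

instance finiteIndex_range_toGL {n R : Type*} [Fintype n] [DecidableEq n] [CommRing R] [Finite Rˣ] :
    (Matrix.SpecialLinearGroup.toGL (n := n) (R := R)).range.FiniteIndex := by
  have hker : (Matrix.SpecialLinearGroup.toGL (n := n) (R := R)).range =
      (Matrix.GeneralLinearGroup.det (n := n) (R := R)).ker :=
    SetLike.coe_injective Matrix.SpecialLinearGroup.range_toGL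
  exact hker ▸ inferInstance

theorem cf_eq_lintime_F2_SL2Z_GL2Z_general {α : Type*} (L : Language α) :
    (L.IsContextFree ↔ GRecognizableLinTime (FreeGroup (Fin 2)) L) ∧
    (GRecognizableLinTime (FreeGroup (Fin 2)) L ↔
      GRecognizableLinTime (Matrix.SpecialLinearGroup (Fin 2) ℤ) L) ∧
    (GRecognizableLinTime (Matrix.SpecialLinearGroup (Fin 2) ℤ) L ↔
      GRecognizableLinTime (GL (Fin 2) ℤ) L) :=
  ⟨isContextFree_iff_gRecognizableLinTime,
    gRecognizableLinTime_iff_of_finiteIndex injective_sanovHom,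
    gRecognizableLinTime_iff_of_finiteIndex Matrix.SpecialLinearGroup.toGL_injective⟩

/-- `CF = 𝔏(F₂)ʷ_{O(n)} = 𝔏(SL(2,ℤ))ʷ_{O(n)} = 𝔏(GL(2,ℤ))ʷ_{O(n)}`. -/
theorem cf_eq_lintime_F2_SL2Z_GL2Z {α : Type} [Fintype α] (L : Language α) :
    (L.IsContextFree ↔ GRecognizableLinTime (FreeGroup (Fin 2)) L) ∧
    (GRecognizableLinTime (FreeGroup (Fin 2)) L ↔
      GRecognizableLinTime (Matrix.SpecialLinearGroup (Fin 2) ℤ) L) ∧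
    (GRecognizableLinTime (Matrix.SpecialLinearGroup (Fin 2) ℤ) L ↔
      GRecognizableLinTime (GL (Fin 2) ℤ) L) :=
  cf_eq_lintime_F2_SL2Z_GL2Z_general L
end

section
/- For every k ≥ 1, 𝔏(ℤ^k)^w_{O(n)} is a proper subset of 𝔏(ℤ^{k+1})^w_{O(n)}: the language L_{k+1} = { 0^{a₁} 1 0^{a₂} 1 ⋯ 0^{a_{k+1}} 1 0^{a₁} 1 0^{a₂} 1 ⋯ 0^{a_{k+1}} 1 : a₁, …, a_{k+1} ≥ 0 } over the alphabet {0,1} is recognized in real time (every transition consumes an input symbol) by a ℤ^{k+1}-automaton, but is not recognized by any weakly linear-time bounded ℤ^k-automaton. -/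
/-- The language `L_k = { 0^(a₁) 1 ⋯ 0^(a_k) 1 0^(a₁) 1 ⋯ 0^(a_k) 1 }` over `{0,1}`. -/
def doubledBlocks (k : ℕ) : Language (Fin 2) :=
  {w | ∃ a : Fin k → ℕ,
    w = (List.ofFn fun i => List.replicate (a i) 0 ++ [1]).flatten ++
        (List.ofFn fun i => List.replicate (a i) 0 ++ [1]).flatten}

/-!
Split an accepting computation on a word `u ++ v` of length `n` at the moment when `u` has been
read. If it runs in time `T`, the state and register at that moment take at most `|Q| * |S ^ T|`
values, where `S` is the finite set of register updates together with `1`. Computations with the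
same state and register there can be recombined, so a family of words whose halves cannot be
exchanged has at most that many members.

In `ℤᵏ` with `T = O(n)` this is `O(nᵏ)`, whereas the words of `doubledBlocks (k + 1)` with blocks
shorter than `N` form such a family of `N ^ (k + 1)` words of length `O(N)`.

Conversely, `K` counters suffice for `doubledBlocks K`: block `i` of the first half increments
counter `i`, and block `i` of the second half decrements it.
-/

open scoped Finset Pointwise

namespace GAutomaton

section Computations

variable {α G : Type*} [Group G] {M : GAutomaton α G}

theorem StepsIn.trans {m n : ℕ} {c d e : M.Q × G × List α}
    (h₁ : M.StepsIn m c d) (h₂ : M.StepsIn n d e) : M.StepsIn (m + n) c e := by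
  induction m generalizing c with
  | zero =>
    obtain rfl : c = d := h₁
    rwa [Nat.zero_add]
  | succ m ih =>
    obtain ⟨b, hb, h₁⟩ := h₁
    rw [Nat.succ_add]
    exact ⟨b, hb, ih h₁⟩

theorem Step.append_input {q q' : M.Q} {x x' : G} {w w' : List α}
    (h : M.Step (q, x, w) (q', x', w')) (v : List α) :
    M.Step (q, x, w ++ v) (q', x', w' ++ v) := by
  obtain ⟨σ, g, hmem, hx, hw⟩ := h
  cases σ <;> exact ⟨_, g, hmem, hx, congrArg (· ++ v) hw⟩

theorem StepsIn.append_input {n : ℕ} {q q' : M.Q} {x x' : G} {w w' : List α}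
    (h : M.StepsIn n (q, x, w) (q', x', w')) (v : List α) :
    M.StepsIn n (q, x, w ++ v) (q', x', w' ++ v) := by
  induction n generalizing q x w with
  | zero =>
    cases h
    rfl
  | succ n ih =>
    obtain ⟨⟨p, y, u⟩, hstep, hrest⟩ := h
    exact ⟨(p, y, u ++ v), hstep.append_input v, ih hrest⟩

theorem Step.of_append_input {q q' : M.Q} {x x' : G} {u v w : List α}
    (h : M.Step (q, x, u ++ v) (q', x', w)) :
    u = [] ∨ ∃ u', w = u' ++ v ∧ M.Step (q, x, u) (q', x', u') := by
  obtain ⟨σ, g, hmem, hx, hw⟩ := h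
  cases u with
  | nil => exact .inl rfl
  | cons a u =>
    right
    cases σ with
    | none => exact ⟨a :: u, hw, none, g, hmem, hx, rfl⟩
    | some s =>
      obtain ⟨rfl, rfl⟩ := List.cons.inj hw
      exact ⟨u, rfl, some a, g, hmem, hx, rfl⟩

theorem StepsIn.exists_split {n : ℕ} {q q' : M.Q} {x x' : G} {u v : List α}
    (h : M.StepsIn n (q, x, u ++ v) (q', x', [])) :
    ∃ m r p y, m + r = n ∧ M.StepsIn m (q, x, u) (p, y, []) ∧
      M.StepsIn r (p, y, v) (q', x', []) := by
  induction n generalizing q x u with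
  | zero =>
    obtain ⟨rfl, rfl⟩ := List.append_eq_nil_iff.mp (congrArg (·.2.2) h)
    exact ⟨0, 0, q, x, rfl, rfl, h⟩
  | succ n ih =>
    obtain ⟨⟨p, y, w⟩, hstep, hrest⟩ := h
    rcases hstep.of_append_input with rfl | ⟨u', rfl, hstep'⟩
    · exact ⟨0, n + 1, q, x, n.succ.zero_add, rfl, _, hstep, hrest⟩
    · obtain ⟨m, r, p', y', hmr, hpre, hpost⟩ := ih hrest
      exact ⟨m + 1, r, p', y', by omega, ⟨_, hstep', hpre⟩, hpost⟩

end Computations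

section Map

variable {α G H : Type*} [Group G] [Group H]

/-- The automaton obtained from `M` by applying the homomorphism `f` to every register update;
it transfers recognizability between groups. -/
def map (M : GAutomaton α G) (f : G →* H) : GAutomaton α H where
  Q := M.Q
  finQ := M.finQ
  q0 := M.q0
  acc := M.acc
  δ := (fun tr => (tr.1, tr.2.1, tr.2.2.1, f tr.2.2.2)) '' M.δ
  finδ := M.finδ.image _

variable (M : GAutomaton α G) (f : G →* H)

theorem step_map_iff {q q' : M.Q} {x : G} {z : H} {w w' : List α} :
    (M.map f).Step (q, f x, w) (q', z, w') ↔
      ∃ y, f y = z ∧ M.Step (q, x, w) (q', y, w') := by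
  constructor
  · rintro ⟨_, _, ⟨⟨_, σ, _, g⟩, hmem, ⟨⟩⟩, rfl, hw⟩
    exact ⟨x * g, map_mul f x g, σ, g, hmem, rfl, hw⟩
  · rintro ⟨_, rfl, σ, g, hmem, rfl, hw⟩
    exact ⟨σ, f g, ⟨_, hmem, rfl⟩, map_mul f x g, hw⟩

theorem stepsIn_map_iff {n : ℕ} {q q' : M.Q} {x : G} {z : H} {w w' : List α} :
    (M.map f).StepsIn n (q, f x, w) (q', z, w') ↔
      ∃ y, f y = z ∧ M.StepsIn n (q, x, w) (q', y, w') := by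
  induction n generalizing q x w with
  | zero =>
    constructor
    · rintro ⟨⟩
      exact ⟨x, rfl, rfl⟩
    · rintro ⟨_, rfl, ⟨⟩⟩
      rfl
  | succ n ih =>
    constructor
    · rintro ⟨⟨p, _, u⟩, hstep, hrest⟩
      obtain ⟨y, rfl, hstep'⟩ := (M.step_map_iff f).mp hstep
      obtain ⟨y', hy', hrest'⟩ := ih.mp hrest
      exact ⟨y', hy', _, hstep', hrest'⟩
    · rintro ⟨y', hy', ⟨p, y, u⟩, hstep, hrest⟩
      exact ⟨(p, f y, u), (M.step_map_iff f).mpr ⟨y, rfl, hstep⟩, ih.mpr ⟨y', hy', hrest⟩⟩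

variable {f}

theorem acceptsIn_map_iff (hf : Function.Injective f) {w : List α} {t : ℕ} :
    (M.map f).AcceptsIn w t ↔ M.AcceptsIn w t := by
  have hsteps (n : ℕ) (q : M.Q) :
      (M.map f).StepsIn n (M.q0, 1, w) (q, 1, []) ↔ M.StepsIn n (M.q0, 1, w) (q, 1, []) := by
    rw [← map_one f, stepsIn_map_iff]
    simp only [hf.eq_iff, exists_eq_left]
  exact exists_congr fun n => and_congr_right' <| exists_congr fun q =>
    and_congr_right' (hsteps n q)

theorem lang_map (hf : Function.Injective f) : (M.map f).lang = M.lang :=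
  Set.ext fun _ => exists_congr fun _ => M.acceptsIn_map_iff hf

end Map

end GAutomaton

theorem GRecognizableLinTime.of_injective {α G H : Type*} [Group G] [Group H] {L : Language α}
    {f : G →* H} (hf : Function.Injective f) (hL : GRecognizableLinTime G L) :
    GRecognizableLinTime H L := by
  obtain ⟨C, M, rfl, hacc⟩ := hL
  exact ⟨C, M.map f, M.lang_map hf, fun w hw => (M.acceptsIn_map_iff hf).mpr (hacc w hw)⟩

theorem GRecognizableLinTime.of_embedding {α ι κ : Type*} {L : Language α} (e : ι ↪ κ)
    (hL : GRecognizableLinTime (Multiplicative (ι → ℤ)) L) :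
    GRecognizableLinTime (Multiplicative (κ → ℤ)) L :=
  hL.of_injective (f := (Function.ExtendByZero.hom ℤ e).toMultiplicative)
    (Function.extend_injective (γ := ℤ) e.injective 0)

/-! ### Fooling families and growth -/

/-- A fooling family for `L`, as used in lower bounds for automata: words `u i ++ v i ∈ L` such
that exchanging the halves of two different members never produces two words of `L`. -/
structure IsFoolingFamily {α ι : Type*} (L : Language α) (u v : ι → List α) : Prop where
  append_mem (i : ι) : u i ++ v i ∈ L
  eq_of_cross_mem {i j : ι} : u i ++ v j ∈ L → u j ++ v i ∈ L → i = j

/-- `G` has growth of degree at most `d`: the powers of each finite subset of `G` satisfy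
`#(S ^ n) = O(n ^ d)`. The bound is in terms of `n + 1` so that it also covers `n = 0`. -/
def HasGrowthDegreeLE (G : Type*) [Group G] [DecidableEq G] (d : ℕ) : Prop :=
  ∀ S : Finset G, ∃ A : ℕ, ∀ n : ℕ, #(S ^ n) ≤ A * (n + 1) ^ d

namespace GAutomaton

variable {α G : Type*} [Group G] (M : GAutomaton α G)

/-- The configuration with state and register `c` is reachable by reading `u`. -/
def Reaches (u : List α) (c : M.Q × G) : Prop :=
  ∃ m, M.StepsIn m (M.q0, 1, u) (c.1, c.2, [])

/-- The word `v` can be accepted starting from state and register `c`. -/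
def AcceptsFrom (c : M.Q × G) (v : List α) : Prop :=
  ∃ r, ∃ q ∈ M.acc, M.StepsIn r (c.1, c.2, v) (q, 1, [])

variable {M}

theorem Reaches.append_mem_lang {u v : List α} {c : M.Q × G}
    (hu : M.Reaches u c) (hv : M.AcceptsFrom c v) : u ++ v ∈ M.lang := by
  obtain ⟨m, hm⟩ := hu
  obtain ⟨r, q, hq, hr⟩ := hv
  exact ⟨m + r, m + r, le_rfl, q, hq, (hm.append_input v).trans hr⟩

variable [DecidableEq G]

variable (M) in
/-- The register updates of `M` together with `1`, so that `M.updates ^ T` contains the value of the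
register after any computation of at most `T` steps. -/
noncomputable def updates : Finset G :=
  insert 1 (M.finδ.toFinset.image (·.2.2.2))

theorem StepsIn.exists_mem_updates_pow {n : ℕ} {c d : M.Q × G × List α} (h : M.StepsIn n c d) :
    ∃ g ∈ M.updates ^ n, d.2.1 = c.2.1 * g := by
  induction n generalizing c with
  | zero =>
    obtain rfl : c = d := h
    exact ⟨1, by simp, (mul_one _).symm⟩
  | succ n ih =>
    obtain ⟨b, ⟨σ, g, hmem, hb, -⟩, hrest⟩ := h
    obtain ⟨g', hg', hd⟩ := ih hrest
    have hg : g ∈ M.updates :=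
      Finset.mem_insert_of_mem (Finset.mem_image_of_mem (·.2.2.2) (M.finδ.mem_toFinset.mpr hmem))
    refine ⟨g * g', ?_, by rw [hd, hb, mul_assoc]⟩
    rw [pow_succ']
    exact Finset.mul_mem_mul hg hg'

theorem AcceptsIn.exists_midpoint {u v : List α} {T : ℕ} (h : M.AcceptsIn (u ++ v) T) :
    ∃ c : M.Q × G, c.2 ∈ M.updates ^ T ∧ M.Reaches u c ∧ M.AcceptsFrom c v := by
  obtain ⟨n, hnT, q, hq, hsteps⟩ := h
  obtain ⟨m, r, p, y, hmr, hpre, hpost⟩ := hsteps.exists_split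
  obtain ⟨g, hg, hyg⟩ := hpre.exists_mem_updates_pow
  obtain rfl : y = g := hyg.trans (one_mul g)
  have hpow : M.updates ^ m ⊆ M.updates ^ T :=
    Finset.pow_subset_pow_right (Finset.mem_insert_self _ _) (by omega)
  exact ⟨(p, y), hpow hg, ⟨m, hpre⟩, r, q, hq, hpost⟩

theorem card_foolingFamily_le {ι : Type*} {u v : ι → List α} {T : ℕ}
    (huv : IsFoolingFamily M.lang u v) (hT : ∀ i, M.AcceptsIn (u i ++ v i) T) :
    Nat.card ι ≤ Nat.card M.Q * #(M.updates ^ T) := by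
  have := M.finQ
  choose c hmem hu hv using fun i => (hT i).exists_midpoint
  let midpoint (i : ι) : M.Q × ↥(M.updates ^ T) := ((c i).1, ⟨(c i).2, hmem i⟩)
  have hinj : midpoint.Injective := by
    intro i j hij
    have hc : c i = c j :=
      Prod.ext (congrArg (·.1) hij) (congrArg (fun p => (p.2 : G)) hij)
    exact huv.eq_of_cross_mem ((hc ▸ hu i).append_mem_lang (hv j))
      ((hc ▸ hu j).append_mem_lang (hv i))
  simpa using Nat.card_le_card_of_injective midpoint hinj

end GAutomaton

theorem HasGrowthDegreeLE.card_foolingFamily_le {α G : Type*} [Group G] [DecidableEq G] {d : ℕ}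
    {L : Language α} (hG : HasGrowthDegreeLE G d) (hL : GRecognizableLinTime G L) :
    ∃ A : ℕ, ∀ (n : ℕ) {ι : Type*} {u v : ι → List α}, IsFoolingFamily L u v →
      (∀ i, (u i ++ v i).length ≤ n) → Nat.card ι ≤ A * (n + 1) ^ d := by
  obtain ⟨C, M, rfl, hacc⟩ := hL
  obtain ⟨A, hA⟩ := hG M.updates
  refine ⟨Nat.card M.Q * (A * (C + 1) ^ d), fun n ι u v huv hlen => ?_⟩
  have hT (i : ι) : M.AcceptsIn (u i ++ v i) (C * n + C) := by
    obtain ⟨m, hm, hrun⟩ := hacc _ (huv.append_mem i)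
    exact ⟨m, hm.trans (Nat.add_le_add_right (Nat.mul_le_mul_left C (hlen i)) C), hrun⟩
  calc Nat.card ι ≤ Nat.card M.Q * #(M.updates ^ (C * n + C)) :=
        GAutomaton.card_foolingFamily_le huv hT
    _ ≤ Nat.card M.Q * (A * (C * n + C + 1) ^ d) := by gcongr; exact hA _
    _ ≤ Nat.card M.Q * (A * ((C + 1) * (n + 1)) ^ d) := by gcongr; linarith
    _ = Nat.card M.Q * (A * (C + 1) ^ d) * (n + 1) ^ d := by rw [mul_pow]; ring

theorem Icc_pow_subset_Icc_pow {M : Type*} [CommMonoid M] [PartialOrder M] [IsOrderedMonoid M]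
    [LocallyFiniteOrder M] [DecidableEq M] (a b : M) (n : ℕ) :
    Finset.Icc a b ^ n ⊆ Finset.Icc (a ^ n) (b ^ n) := by
  induction n with
  | zero => simp only [pow_zero, Finset.Icc_self, Finset.singleton_one, subset_rfl]
  | succ n ih =>
    simp only [pow_succ]
    exact (Finset.mul_subset_mul_right ih).trans (Finset.Icc_mul_Icc_subset' _ _ _ _)

theorem hasGrowthDegreeLE_multiplicative_int (ι : Type*) [Fintype ι]
    [DecidableEq (Multiplicative (ι → ℤ))] :
    HasGrowthDegreeLE (Multiplicative (ι → ℤ)) (Fintype.card ι) := by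
  classical
  intro S
  obtain ⟨a, ha⟩ := (S.map Multiplicative.toAdd.toEmbedding).bddBelow
  obtain ⟨b, hb⟩ := (S.map Multiplicative.toAdd.toEmbedding).bddAbove
  have hS : S ⊆ Finset.Icc (Multiplicative.ofAdd a) (Multiplicative.ofAdd b) := fun x hx =>
    Finset.mem_Icc.mpr ⟨ha (Finset.mem_map_of_mem _ hx), hb (Finset.mem_map_of_mem _ hx)⟩
  refine ⟨∏ i, ((b i - a i).toNat + 1), fun n => ?_⟩
  calc #(S ^ n)
      ≤ #(Finset.Icc (Multiplicative.ofAdd a ^ n) (Multiplicative.ofAdd b ^ n)) :=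
        Finset.card_le_card ((Finset.pow_subset_pow_left hS).trans (Icc_pow_subset_Icc_pow _ _ n))
    _ = #(Finset.Icc (n • a) (n • b)) :=
        Finset.card_equiv Multiplicative.toAdd fun x => by
          rw [Finset.mem_Icc, Finset.mem_Icc]
          rfl
    _ = ∏ i, (n * b i + 1 - n * a i).toNat := by simp [Pi.card_Icc]
    _ ≤ ∏ i, (((b i - a i).toNat + 1) * (n + 1)) := by
        refine Finset.prod_le_prod' fun i _ => ?_
        rw [Int.toNat_le]
        push_cast
        nlinarith [Int.self_le_toNat (b i - a i)]
    _ = (∏ i, ((b i - a i).toNat + 1)) * (n + 1) ^ Fintype.card ι := by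
        rw [Finset.prod_mul_distrib, Finset.prod_const, Finset.card_univ]

/-! ### Unary blocks -/

/-- The word `0^(a₁) 1 ⋯ 0^(aₙ) 1` coding the list `[a₁, …, aₙ]` of naturals. -/
def unaryBlocks (l : List ℕ) : List (Fin 2) :=
  (l.map fun a => List.replicate a 0 ++ [1]).flatten

@[simp]
theorem unaryBlocks_nil : unaryBlocks [] = [] := rfl

@[simp]
theorem unaryBlocks_cons (a : ℕ) (l : List ℕ) :
    unaryBlocks (a :: l) = List.replicate a 0 ++ 1 :: unaryBlocks l := by
  simp [unaryBlocks]

theorem unaryBlocks_append (l l' : List ℕ) :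
    unaryBlocks (l ++ l') = unaryBlocks l ++ unaryBlocks l' := by
  simp [unaryBlocks]

theorem length_unaryBlocks (l : List ℕ) : (unaryBlocks l).length = l.sum + l.length := by
  induction l with
  | nil => rfl
  | cons a l ih => grind [unaryBlocks_cons]

theorem replicate_append_cons_inj {α : Type*} {x y : α} (hxy : x ≠ y) {m n : ℕ} {w w' : List α} :
    List.replicate m x ++ y :: w = List.replicate n x ++ y :: w' ↔ m = n ∧ w = w' := by
  induction m generalizing n with
  | zero => cases n <;> simp [List.replicate_succ, hxy.symm]
  | succ m ih => cases n <;> simp [List.replicate_succ, hxy, ih]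

theorem unaryBlocks_injective : Function.Injective unaryBlocks := by
  intro l l' h
  induction l generalizing l' with
  | nil => cases l' <;> simp_all
  | cons a l ih =>
    cases l' with
    | nil => simp at h
    | cons b l' =>
      rw [unaryBlocks_cons, unaryBlocks_cons, replicate_append_cons_inj zero_ne_one] at h
      rw [h.1, ih h.2]

theorem mem_doubledBlocks_iff {K : ℕ} {w : List (Fin 2)} :
    w ∈ doubledBlocks K ↔ ∃ a : Fin K → ℕ,
      w = unaryBlocks (List.ofFn a) ++ unaryBlocks (List.ofFn a) := by
  simp only [unaryBlocks, List.map_ofFn]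
  rfl

theorem isFoolingFamily_doubledBlocks (K N : ℕ) :
    IsFoolingFamily (doubledBlocks K)
      (fun a : Fin K → Fin N => unaryBlocks (List.ofFn fun i => (a i : ℕ)))
      (fun a : Fin K → Fin N => unaryBlocks (List.ofFn fun i => (a i : ℕ))) where
  append_mem a := mem_doubledBlocks_iff.mpr ⟨_, rfl⟩
  eq_of_cross_mem {a b} hab _ := by
    obtain ⟨c, hc⟩ := mem_doubledBlocks_iff.mp hab
    simp only [← unaryBlocks_append] at hc
    obtain ⟨hac, hbc⟩ := List.append_inj (unaryBlocks_injective hc) (by simp)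
    funext i
    exact Fin.ext (congrFun (List.ofFn_injective (hac.trans hbc.symm)) i)

theorem length_unaryBlocks_ofFn_le {K N : ℕ} (a : Fin K → Fin N) :
    (unaryBlocks (List.ofFn fun i => (a i : ℕ))).length ≤ K * N := by
  calc (unaryBlocks (List.ofFn fun i => (a i : ℕ))).length = ∑ i, ((a i : ℕ) + 1) := by
        simp [length_unaryBlocks, List.sum_ofFn, Finset.sum_add_distrib]
    _ ≤ ∑ _i : Fin K, N := Finset.sum_le_sum fun i _ => (a i).isLt
    _ = K * N := by simp

theorem HasGrowthDegreeLE.not_gRecognizableLinTime_doubledBlocks {G : Type*} [Group G]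
    [DecidableEq G] {d K : ℕ} (hG : HasGrowthDegreeLE G d) (hdK : d < K) :
    ¬ GRecognizableLinTime G (doubledBlocks K) := by
  intro hL
  obtain ⟨A, hA⟩ := hG.card_foolingFamily_le hL
  set N := A * (2 * K + 1) ^ d + 1
  have hN_pos : 0 < N := Nat.succ_pos _
  have hlt : A * (2 * (K * N) + 1) ^ d < N ^ K := by
    calc A * (2 * (K * N) + 1) ^ d ≤ A * ((2 * K + 1) * N) ^ d := by gcongr; linarith
      _ = A * (2 * K + 1) ^ d * N ^ d := by rw [mul_pow, mul_assoc]
      _ < N * N ^ d := by gcongr; exact Nat.lt_succ_self _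
      _ = N ^ (d + 1) := (pow_succ' N d).symm
      _ ≤ N ^ K := Nat.pow_le_pow_right hN_pos hdK
  have hle := hA (2 * (K * N)) (isFoolingFamily_doubledBlocks K N) fun a => by
    rw [List.length_append]
    linarith [length_unaryBlocks_ofFn_le a]
  simp only [Nat.card_eq_fintype_card, Fintype.card_fun, Fintype.card_fin] at hle
  omega

theorem zipWith_drop_ofFn_cons {α β γ : Type*} {n : ℕ} (f : α → β → γ) (g : Fin n → α) (i : Fin n)
    (b : β) (l : List β) :
    List.zipWith f ((List.ofFn g).drop i) (b :: l) =
      f (g i) b :: List.zipWith f ((List.ofFn g).drop (i + 1)) l := by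
  rw [List.drop_eq_getElem_cons (by simp), List.zipWith_cons_cons, List.getElem_ofFn]

/-- The real-time automaton reading exactly `n` unary blocks. Its state is the number of blocks
already read, and each `0` of block `i` multiplies the register by `g i`. -/
def blockAutomaton {G : Type*} [Group G] {n : ℕ} (g : Fin n → G) : GAutomaton (Fin 2) G where
  Q := Fin (n + 1)
  finQ := inferInstance
  q0 := 0
  acc := {Fin.last n}
  δ := Set.range (fun i : Fin n => (i.castSucc, some 0, i.castSucc, g i)) ∪
    Set.range (fun i : Fin n => (i.castSucc, some 1, i.succ, 1))
  finδ := (Set.finite_range _).union (Set.finite_range _)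

namespace blockAutomaton

variable {G : Type*}

section Group

variable [Group G] {n : ℕ} (g : Fin n → G)

theorem realTime : (blockAutomaton g).RealTime := by
  rintro _ (⟨i, rfl⟩ | ⟨i, rfl⟩) <;> exact Option.some_ne_none _

theorem step_iff {p q : Fin (n + 1)} {x y : G} {w w' : List (Fin 2)} :
    (blockAutomaton g).Step (p, x, w) (q, y, w') ↔ ∃ i : Fin n, p = i.castSucc ∧
      (q = i.castSucc ∧ y = x * g i ∧ w = 0 :: w' ∨ q = i.succ ∧ y = x ∧ w = 1 :: w') := by
  constructor
  · rintro ⟨σ, m, ⟨i, hi⟩ | ⟨i, hi⟩, hy, hw⟩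
    · cases hi
      exact ⟨i, rfl, .inl ⟨rfl, hy, hw⟩⟩
    · cases hi
      exact ⟨i, rfl, .inr ⟨rfl, hy.trans (mul_one x), hw⟩⟩
  · rintro ⟨i, rfl, ⟨rfl, rfl, rfl⟩ | ⟨rfl, rfl, rfl⟩⟩
    · exact ⟨some 0, g i, .inl ⟨i, rfl⟩, rfl, rfl⟩
    · exact ⟨some 1, 1, .inr ⟨i, rfl⟩, (mul_one _).symm, rfl⟩

theorem exists_stepsIn_unaryBlocks (l : List ℕ) {i : Fin (n + 1)} (hl : i + l.length = n) (x : G) :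
    ∃ t, (blockAutomaton g).StepsIn t (i, x, unaryBlocks l)
      (Fin.last n, x * (List.zipWith (· ^ ·) ((List.ofFn g).drop i) l).prod, []) := by
  induction l generalizing i x with
  | nil =>
    obtain rfl : i = Fin.last n := Fin.ext hl
    exact ⟨0, by simp [GAutomaton.StepsIn]⟩
  | cons a l ih =>
    obtain ⟨i, rfl⟩ : ∃ j : Fin n, j.castSucc = i :=
      ⟨i.castLT (by rw [List.length_cons] at hl; omega), Fin.castSucc_castLT i _⟩
    induction a generalizing x with
    | zero =>
      obtain ⟨t, ht⟩ := ih (i := i.succ) (by grind) x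
      refine ⟨t + 1, (i.succ, x, unaryBlocks l),
        (step_iff g).mpr ⟨i, rfl, .inr ⟨rfl, rfl, rfl⟩⟩, ?_⟩
      simpa [zipWith_drop_ofFn_cons] using ht
    | succ a iha =>
      obtain ⟨t, ht⟩ := iha (x * g i) hl
      refine ⟨t + 1, (i.castSucc, x * g i, unaryBlocks (a :: l)),
        (step_iff g).mpr ⟨i, rfl, .inl ⟨rfl, rfl, rfl⟩⟩, ?_⟩
      simpa [zipWith_drop_ofFn_cons, pow_succ', mul_assoc] using ht

theorem exists_eq_unaryBlocks_of_stepsIn {t : ℕ} {i : Fin (n + 1)} {x y : G} {w : List (Fin 2)}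
    (h : (blockAutomaton g).StepsIn t (i, x, w) (Fin.last n, y, [])) :
    ∃ l : List ℕ, i + l.length = n ∧ w = unaryBlocks l ∧
      y = x * (List.zipWith (· ^ ·) ((List.ofFn g).drop i) l).prod := by
  induction t generalizing i x w with
  | zero =>
    obtain ⟨⟩ := h
    exact ⟨[], by simp⟩
  | succ t ih =>
    obtain ⟨⟨p, z, v⟩, hstep, hrest⟩ := h
    obtain ⟨l, hl, rfl, rfl⟩ := ih hrest
    obtain ⟨i, rfl, ⟨rfl, rfl, rfl⟩ | ⟨rfl, rfl, rfl⟩⟩ := (step_iff g).mp hstep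
    · rcases l with _ | ⟨a, l⟩
      · exact absurd hl i.isLt.ne
      · exact ⟨(a + 1) :: l, hl, rfl,
          by simp [zipWith_drop_ofFn_cons, pow_succ', mul_assoc]⟩
    · exact ⟨0 :: l, by grind, rfl, by simp [zipWith_drop_ofFn_cons]⟩

theorem mem_lang_iff_exists_stepsIn {w : List (Fin 2)} :
    w ∈ (blockAutomaton g).lang ↔
      ∃ t, (blockAutomaton g).StepsIn t ((0 : Fin (n + 1)), 1, w) (Fin.last n, 1, []) := by
  constructor
  · rintro ⟨_, t, -, _, rfl, ht⟩
    exact ⟨t, ht⟩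
  · rintro ⟨t, ht⟩
    exact ⟨t, t, le_rfl, _, rfl, ht⟩

theorem mem_lang_iff {w : List (Fin 2)} :
    w ∈ (blockAutomaton g).lang ↔ ∃ a : Fin n → ℕ,
      w = unaryBlocks (List.ofFn a) ∧ (List.ofFn fun i => g i ^ a i).prod = 1 := by
  have hzip (a : Fin n → ℕ) : List.zipWith (· ^ ·) (List.ofFn g) (List.ofFn a) =
      List.ofFn fun i => g i ^ a i := List.ext_getElem (by simp) (by simp)
  rw [mem_lang_iff_exists_stepsIn]
  constructor
  · rintro ⟨t, ht⟩
    obtain ⟨l, hl, rfl, hprod⟩ := exists_eq_unaryBlocks_of_stepsIn g ht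
    obtain ⟨a, rfl⟩ : ∃ a : Fin n → ℕ, List.ofFn a = l := by
      obtain rfl : l.length = n := by simpa using hl
      exact ⟨l.get, List.ofFn_get l⟩
    exact ⟨a, rfl, by simpa [hzip] using hprod.symm⟩
  · rintro ⟨a, rfl, hprod⟩
    obtain ⟨t, ht⟩ := exists_stepsIn_unaryBlocks g (List.ofFn a) (i := 0) (by simp) 1
    exact ⟨t, by simpa [hzip, hprod] using ht⟩

end Group

theorem lang_append_inv [CommGroup G] {K : ℕ} {g : Fin K → G}
    (hg : Function.Injective fun a : Fin K → ℕ => ∏ i, g i ^ a i) :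
    (blockAutomaton (Fin.append g g⁻¹)).lang = doubledBlocks K := by
  have hprod (a b : Fin K → ℕ) :
      (List.ofFn fun i => Fin.append g g⁻¹ i ^ Fin.append a b i).prod = 1 ↔ a = b := by
    rw [List.prod_ofFn, Fin.prod_univ_add]
    simp only [Fin.append_left, Fin.append_right, Pi.inv_apply, inv_pow, Finset.prod_inv_distrib,
      mul_inv_eq_one]
    exact hg.eq_iff
  ext w
  rw [mem_lang_iff, mem_doubledBlocks_iff, (Fin.appendEquiv K K).surjective.exists]
  simp only [Prod.exists, Fin.appendEquiv, Equiv.coe_fn_mk, hprod, List.ofFn_fin_append,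
    unaryBlocks_append, exists_eq_right']

end blockAutomaton

theorem prod_ofAdd_single_pow {ι : Type*} [Fintype ι] [DecidableEq ι] (a : ι → ℕ) :
    ∏ i, Multiplicative.ofAdd (Pi.single i 1 : ι → ℤ) ^ a i =
      Multiplicative.ofAdd fun i => (a i : ℤ) := by
  rw [← Finset.univ_sum_single (fun i => (a i : ℤ)), ofAdd_sum]
  simp [← ofAdd_nsmul, ← Pi.single_smul]

theorem exists_realTime_lang_eq_doubledBlocks (K : ℕ) :
    ∃ M : GAutomaton (Fin 2) (Multiplicative (Fin K → ℤ)),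
      M.RealTime ∧ M.lang = doubledBlocks K := by
  refine ⟨_, blockAutomaton.realTime _, blockAutomaton.lang_append_inv
    (g := fun i => Multiplicative.ofAdd (Pi.single i 1)) fun a b hab => ?_⟩
  simp only [prod_ofAdd_single_pow] at hab
  funext i
  exact Nat.cast_injective (R := ℤ) (congrFun (Multiplicative.ofAdd.injective hab) i)

/-- For every `k ≥ 1`, `𝔏(ℤᵏ)ʷ_{O(n)} ⊊ 𝔏(ℤ^(k+1))ʷ_{O(n)}`: the
language `L_(k+1)` is recognized in real time by a `ℤ^(k+1)`-automaton but by no weakly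
linear-time bounded `ℤᵏ`-automaton. (The free Abelian group `ℤᵏ` is rendered
multiplicatively as `Multiplicative (Fin k → ℤ)`.) -/
theorem Zk_lintime_hierarchy (k : ℕ) (hk : 1 ≤ k) :
    (∀ (α : Type) [Fintype α] (L : Language α),
      GRecognizableLinTime (Multiplicative (Fin k → ℤ)) L →
        GRecognizableLinTime (Multiplicative (Fin (k + 1) → ℤ)) L) ∧
    (∃ M : GAutomaton (Fin 2) (Multiplicative (Fin (k + 1) → ℤ)),
      M.RealTime ∧ M.lang = doubledBlocks (k + 1)) ∧
    ¬ GRecognizableLinTime (Multiplicative (Fin k → ℤ)) (doubledBlocks (k + 1)) := by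
  have hgrowth : HasGrowthDegreeLE (Multiplicative (Fin k → ℤ)) k := by
    simpa using hasGrowthDegreeLE_multiplicative_int (Fin k)
  exact ⟨fun _ _ _ hL => hL.of_embedding Fin.castSuccEmb,
    exists_realTime_lang_eq_doubledBlocks (k + 1),
    hgrowth.not_gRecognizableLinTime_doubledBlocks k.lt_succ_self⟩
end
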